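/- arXiv:2204.01926 — 11 statements merged into one kernel-verified Lean document; each statement's English description precedes it below -/
import Mathlib

section
/- Let q : ℕ → ℚ ∩ [0,1] be a bijection, let g : [0,1] → ℝ be given by g(x) = Σ_{n : q(n) ≤ x} 2^{−n}, and let G(x) = ∫₀ˣ g(t) dt. Then G is convex on [0,1], and at every irrational point x ∈ (0,1) the function G is differentiable with derivative G'(x) = g(x). -/
/-!
The function `g` is monotone, being a sum of monotone step functions dominated by a geometric
series. The mean of `g` over `[x, y]` is therefore at most `g y`, and its mean over `[y, z]` at
least `g y`, so adjacent slopes of `G` increase and `G` is convex. At an irrational `x` every step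
function is locally constant, so by dominated convergence `g` is continuous at `x`, and the
fundamental theorem of calculus gives `G'(x) = g x`.
-/

/-- An antiderivative of a monotone function is convex: the value `g y` separates the slopes of
`G` on the two sides of `y`. -/
lemma convexOn_integral_of_monotone {g G : ℝ → ℝ} (hmono : Monotone g)
    (hG : ∀ x : ℝ, G x = ∫ t in (0:ℝ)..x, g t) {s : Set ℝ} (hs : Convex ℝ s) :
    ConvexOn ℝ s G := by
  have hint : ∀ a b : ℝ, IntervalIntegrable g MeasureTheory.volume a b :=
    fun a b => hmono.intervalIntegrable
  have hsub : ∀ a b : ℝ, G b - G a = ∫ t in a..b, g t := fun a b => by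
    rw [hG, hG, intervalIntegral.integral_interval_sub_left (hint _ _) (hint _ _)]
  refine convexOn_of_slope_mono_adjacent hs fun {x y z} _ _ hxy hyz => ?_
  have h1 : G y - G x ≤ g y * (y - x) := by
    rw [hsub]
    calc ∫ t in x..y, g t ≤ ∫ _ in x..y, g y :=
          intervalIntegral.integral_mono_on hxy.le (hint _ _) (by simp) fun t ht => hmono ht.2
      _ = g y * (y - x) := by simp [mul_comm]
  have h2 : g y * (z - y) ≤ G z - G y := by
    rw [hsub]
    calc g y * (z - y) = ∫ _ in y..z, g y := by simp [mul_comm]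
      _ ≤ ∫ t in y..z, g t :=
          intervalIntegral.integral_mono_on hyz.le (by simp) (hint _ _) fun t ht => hmono ht.1
  exact ((div_le_iff₀ (sub_pos.2 hxy)).2 h1).trans ((le_div_iff₀ (sub_pos.2 hyz)).2 h2)

/-- For a bijective enumeration `q` of the rationals in `[0,1]`, the antiderivative
`G(x) = ∫₀ˣ g(t) dt` of `g(x) = Σ_{q(n) ≤ x} 2⁻ⁿ` is convex on `[0,1]` and is
differentiable at every irrational point of `(0,1)` with derivative `g(x)`. -/
theorem antiderivative_convex_and_deriv_at_irrational
    (q : ℕ → ℚ) (hq_inj : Function.Injective q)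
    (hq_range : Set.range q = {r : ℚ | 0 ≤ r ∧ r ≤ 1})
    (g : ℝ → ℝ) (hg : ∀ x : ℝ, g x = ∑' n : ℕ, if (q n : ℝ) ≤ x then (1 / 2 : ℝ) ^ n else 0)
    (G : ℝ → ℝ) (hG : ∀ x : ℝ, G x = ∫ t in (0:ℝ)..x, g t) :
    ConvexOn ℝ (Set.Icc (0:ℝ) 1) G ∧
    ∀ x ∈ Set.Ioo (0:ℝ) 1, Irrational x → HasDerivAt G (g x) x := by
  
  have hbd : ∀ (n : ℕ) (x : ℝ),
      ‖(if (q n : ℝ) ≤ x then (1 / 2 : ℝ) ^ n else 0)‖ ≤ (1 / 2 : ℝ) ^ n := by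
    intro n x
    split_ifs
    · simp
    · simp
  have hsum : ∀ x : ℝ, Summable fun n : ℕ => if (q n : ℝ) ≤ x then (1 / 2 : ℝ) ^ n else 0 :=
    fun x => Summable.of_norm_bounded summable_geometric_two fun n => hbd n x
  have hmono : Monotone g := by
    intro x y hxy
    rw [hg, hg]
    refine (hsum x).tsum_le_tsum (fun n => ?_) (hsum y)
    by_cases h : (q n : ℝ) ≤ x
    · rw [if_pos h, if_pos (h.trans hxy)]
    · rw [if_neg h]
      split_ifs <;> positivity
  refine ⟨convexOn_integral_of_monotone hmono hG (convex_Icc 0 1), fun x _ hirr => ?_⟩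
  have hcont : ContinuousAt g x := by
    rw [ContinuousAt, hg x, funext hg]
    refine tendsto_tsum_of_dominated_convergence summable_geometric_two (fun n => ?_)
      (Filter.Eventually.of_forall fun y n => hbd n y)
    -- Since `x ≠ q n`, the `n`-th step function is constant near `x`.
    refine tendsto_const_nhds.congr' ?_
    rcases (hirr.ne_rat (q n)).lt_or_gt with h | h
    · filter_upwards [eventually_lt_nhds h] with y hy
      rw [if_neg h.not_ge, if_neg hy.not_ge]
    · filter_upwards [eventually_gt_nhds h] with y hy
      rw [if_pos h.le, if_pos hy.le]
  rw [funext hG]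
  exact intervalIntegral.integral_hasDerivAt_right hmono.intervalIntegrable
    hmono.measurable.stronglyMeasurable.stronglyMeasurableAtFilter hcont
end

section
/- Let q : ℕ → ℚ ∩ [0,1] be a bijection, let g : [0,1] → ℝ be given by g(x) = Σ_{n : q(n) ≤ x} 2^{−n}, and let G(x) = ∫₀ˣ g(t) dt. Then G is not differentiable at any rational point x ∈ (0,1). Consequently there is no point x ∈ (0,1) at which G is twice differentiable in the classical sense, i.e. there is no x ∈ (0,1) admitting a neighborhood on which G is differentiable with derivative G' differentiable at x. -/
/-!
The function `g` is monotone and jumps by at least `c = 2⁻ⁿ` at the rational `x = q n`: the `n`-th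
term enters the sum exactly at `x`. Its antiderivative `G` is therefore convex, and every
`s ∈ [g x - c, g x]` is a subgradient of `G` at `x`. A function differentiable at `x` has at most
one subgradient there (`y ↦ G y - s * (y - x)` has a minimum at `x`, so `G' x = s`); as
`c > 0`, `G` is not differentiable at `x`. Since the rationals are dense, `G` is differentiable
on no neighbourhood of any point of `(0,1)`, which gives the second claim.
-/

/-- If the monotone function `g` stays below `s` to the left of `x`, and `s ≤ g x`, then `s` is a
subgradient at `x` of the antiderivative of `g`. -/
lemma antiderivative_subgradient {g : ℝ → ℝ} (hmono : Monotone g) {x s : ℝ} (hs : s ≤ g x)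
    (hleft : ∀ y < x, g y ≤ s) (y : ℝ) :
    (∫ t in (0:ℝ)..x, g t) + s * (y - x) ≤ ∫ t in (0:ℝ)..y, g t := by
  have hint : ∀ a b : ℝ, IntervalIntegrable g MeasureTheory.volume a b :=
    fun a b => hmono.intervalIntegrable
  have hc : ∀ a b : ℝ, IntervalIntegrable (fun _ : ℝ => s) MeasureTheory.volume a b :=
    fun a b => intervalIntegrable_const
  rcases le_total x y with hxy | hxy
  · have h1 := intervalIntegral.integral_add_adjacent_intervals (hint 0 x) (hint x y)
    have h2 := intervalIntegral.integral_mono_on hxy (hc x y) (hint x y)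
      (fun t ht => hs.trans (hmono ht.1))
    simp only [intervalIntegral.integral_const, smul_eq_mul] at h2
    linarith
  · have h1 := intervalIntegral.integral_add_adjacent_intervals (hint 0 y) (hint y x)
    -- At `t = x` itself the bound `g t ≤ s` may fail, hence the open interval.
    have h2 := intervalIntegral.integral_mono_on_of_le_Ioo hxy (hint y x) (hc y x)
      (fun t ht => hleft t ht.2)
    simp only [intervalIntegral.integral_const, smul_eq_mul] at h2
    linarith

lemma eq_of_hasDerivAt_of_subgradient {G : ℝ → ℝ} {x d s : ℝ} (hd : HasDerivAt G d x)
    (hs : ∀ y, G x + s * (y - x) ≤ G y) : d = s := by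
  have hmin : IsLocalMin (fun y => G y - s * (y - x)) x :=
    Filter.Eventually.of_forall fun y => by
      have := hs y
      simp only [sub_self, mul_zero]
      linarith
  have h := hmin.hasDerivAt_eq_zero (hd.sub (((hasDerivAt_id x).sub_const x).const_mul s))
  linarith

/-- For a bijective enumeration `q` of the rationals in `[0,1]`, the antiderivative
`G(x) = ∫₀ˣ g(t) dt` of `g(x) = Σ_{q(n) ≤ x} 2⁻ⁿ` is not differentiable at any rational
point of `(0,1)`; consequently there is no point of `(0,1)` at which `G` is twice
differentiable in the classical sense. -/
theorem antiderivative_not_differentiable_at_rationals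
    (q : ℕ → ℚ) (hq_inj : Function.Injective q)
    (hq_range : Set.range q = {r : ℚ | 0 ≤ r ∧ r ≤ 1})
    (g : ℝ → ℝ) (hg : ∀ x : ℝ, g x = ∑' n : ℕ, if (q n : ℝ) ≤ x then (1 / 2 : ℝ) ^ n else 0)
    (G : ℝ → ℝ) (hG : ∀ x : ℝ, G x = ∫ t in (0:ℝ)..x, g t) :
    (∀ x ∈ Set.Ioo (0:ℝ) 1, (∃ r : ℚ, (r : ℝ) = x) → ¬ DifferentiableAt ℝ G x) ∧
    ¬ ∃ x ∈ Set.Ioo (0:ℝ) 1, ∃ U ∈ nhds x, ∃ G' : ℝ → ℝ,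
        (∀ y ∈ U, HasDerivAt G (G' y) y) ∧ DifferentiableAt ℝ G' x := by
  have hsum : ∀ x : ℝ, Summable fun n : ℕ => if (q n : ℝ) ≤ x then (1 / 2 : ℝ) ^ n else 0 := by
    intro x
    refine Summable.of_nonneg_of_le (fun n => ?_) (fun n => ?_) summable_geometric_two
    · split_ifs <;> positivity
    · split_ifs
      · exact le_rfl
      · positivity
  have hmono : Monotone g := by
    intro x y hxy
    rw [hg, hg]
    refine (hsum x).tsum_le_tsum (fun n => ?_) (hsum y)
    by_cases h : (q n : ℝ) ≤ x
    · rw [if_pos h, if_pos (h.trans hxy)]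
    · rw [if_neg h]
      split_ifs <;> positivity
  have hjump : ∀ n : ℕ, ∀ y < (q n : ℝ), g y ≤ g (q n) - (1 / 2 : ℝ) ^ n := by
    intro n y hy
    have hsingle := hasSum_ite_eq n ((1 / 2 : ℝ) ^ n)
    rw [le_sub_iff_add_le, hg, hg]
    rw [← hsingle.tsum_eq, ← (hsum y).tsum_add hsingle.summable]
    refine ((hsum y).add hsingle.summable).tsum_le_tsum (fun m => ?_) (hsum _)
    by_cases hm : m = n
    · subst hm
      simp [not_le.mpr hy]
    · by_cases h : (q m : ℝ) ≤ y
      · simp [hm, h, h.trans hy.le]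
      · simp only [hm, h, if_false, add_zero]
        split_ifs <;> positivity
  have hrat : ∀ x ∈ Set.Ioo (0:ℝ) 1, (∃ r : ℚ, (r : ℝ) = x) → ¬ DifferentiableAt ℝ G x := by
    rintro _ ⟨h0, h1⟩ ⟨r, rfl⟩ hdiff
    obtain ⟨n, rfl⟩ : r ∈ Set.range q := by
      rw [hq_range]
      exact ⟨by exact_mod_cast h0.le, by exact_mod_cast h1.le⟩
    have hpos : (0:ℝ) < (1 / 2 : ℝ) ^ n := by positivity
    have hsub : ∀ s : ℝ, g (q n) - (1 / 2 : ℝ) ^ n ≤ s → s ≤ g (q n) → deriv G (q n) = s := by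
      intro s hs1 hs2
      refine eq_of_hasDerivAt_of_subgradient hdiff.hasDerivAt fun y => ?_
      rw [hG, hG]
      exact antiderivative_subgradient hmono hs2 (fun z hz => (hjump n z hz).trans hs1) y
    have e1 := hsub (g (q n)) (by linarith) le_rfl
    have e2 := hsub (g (q n) - (1 / 2 : ℝ) ^ n) le_rfl (by linarith)
    linarith
  refine ⟨hrat, ?_⟩
  rintro ⟨x, hx, U, hU, G', hG', -⟩
  obtain ⟨r, hrU, hrI⟩ := (Rat.denseRange_cast (𝕜 := ℝ)).exists_mem_open
    ((isOpen_interior (s := U)).inter isOpen_Ioo) ⟨x, mem_interior_iff_mem_nhds.mpr hU, hx⟩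
  exact hrat _ hrI ⟨r, rfl⟩ (hG' _ (interior_subset hrU)).differentiableAt
end

section
/- Let f : [−1,1] → ℝ be defined by f(0) = 0, f(x) = x² if |x| = 1/n for some n ∈ ℕ, and f(x) = ((2n+1)/(n(n+1)))|x| − 1/(n(n+1)) if 1/(n+1) < |x| < 1/n for some n ∈ ℕ. Then: (a) f is convex on [−1,1]; (b) there exists a monotone function Θ : [0,∞) → ℝ with lim_{t→0} Θ(t) = 0 such that for every x ∈ (−1,1) and every subdifferential v of f at x one has |v − 2x| ≤ Θ(|x|)·|x| (so f is twice differentiable at 0 in the generalized sense with generalized first derivative 0 and generalized second derivative 2); (c) f is not twice differentiable at 0 in the classical sense: there is no neighborhood of 0 on which f is differentiable at every point. -/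
/-!
The proof rests on two lower bounds for `f` on `[-1, 1]`. Write
`L_m t = (1/m + 1/(m+1)) t - (1/m)(1/(m+1))`, so that `t² - L_m t = (t - 1/m)(t - 1/(m+1))`.
On `1/(n+1) ≤ |x| ≤ 1/n` one has `f x = L_n |x| ≥ x²`, while `L_m |x| ≤ x²` for every `m ≠ n`.
Hence `x² ≤ f x` (`sq_le_f`) and `L_m |x| ≤ f x` for every `m ≥ 1` (`chord_le_f`).

* Convexity: `chord_le_f` gives a supporting line at each point other than `0`, and the zero line
  supports `f` at `0`.
* Generalized second derivative: if `v` is a subgradient at `x > 0` and `y = 1/k`, then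
  `v (y - x) ≤ f y - f x ≤ y² - x²`, so `v - 2x` is bounded by `y - x` from the side on which `y`
  lies. The neighbours of `x` among the points `1/k` are at distance at most `2x²`, so
  `Θ t = 2t` works.
* Non-differentiability: at `x = 1/n`, both `y ↦ y²` and `L_n` touch `f` from below, with the
  distinct slopes `2/n` and `1/n + 1/(n+1)`.
-/

/-- The hypotheses on `f` in the theorem, bundled. -/
structure IsChordFunction (f : ℝ → ℝ) : Prop where
  zero : f 0 = 0
  sq : ∀ n : ℕ, 1 ≤ n → ∀ x : ℝ, |x| = 1 / (n : ℝ) → f x = x ^ 2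
  lin : ∀ n : ℕ, 1 ≤ n → ∀ x : ℝ, 1 / ((n : ℝ) + 1) < |x| → |x| < 1 / (n : ℝ) →
      f x = ((2 * (n : ℝ) + 1) / ((n : ℝ) * ((n : ℝ) + 1))) * |x| - 1 / ((n : ℝ) * ((n : ℝ) + 1))

namespace IsChordFunction

variable {f : ℝ → ℝ}

lemma comp_neg (hf : IsChordFunction f) : IsChordFunction (fun x => f (-x)) where
  zero := by simpa using hf.zero
  sq n hn x hx := by simpa using hf.sq n hn (-x) (by simpa using hx)
  lin n hn x h1 h2 := by
    simpa using hf.lin n hn (-x) (by simpa using h1) (by simpa using h2)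

lemma exists_bracket {t : ℝ} (h0 : 0 < t) (h1 : t ≤ 1) :
    ∃ n : ℕ, 1 ≤ n ∧ 1 / ((n : ℝ) + 1) < t ∧ t ≤ 1 / (n : ℝ) := by
  have h : 1 ≤ 1 / t := by rwa [le_div_iff₀ h0, one_mul]
  have hn : 1 ≤ ⌊1 / t⌋₊ := Nat.le_floor (by exact_mod_cast h)
  have hn' : (0 : ℝ) < ⌊1 / t⌋₊ := by exact_mod_cast hn
  refine ⟨⌊1 / t⌋₊, hn, ?_, ?_⟩
  · rw [one_div_lt (by positivity) h0]
    exact Nat.lt_floor_add_one _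
  · rw [le_one_div h0 hn']
    exact Nat.floor_le (by positivity)

/-- The bracketing of `exists_bracket` with the strict inequality on the other side. -/
lemma exists_bracket' {t : ℝ} (h0 : 0 < t) (h1 : t < 1) :
    ∃ n : ℕ, 1 ≤ n ∧ 1 / ((n : ℝ) + 1) ≤ t ∧ t < 1 / (n : ℝ) := by
  obtain ⟨n, hn, h2, h3⟩ := exists_bracket h0 h1.le
  rcases h3.lt_or_eq with h | h
  · exact ⟨n, hn, h2.le, h⟩
  · have hn1 : n ≠ 1 := by
      rintro rfl
      norm_num at h
      linarith
    obtain ⟨k, rfl⟩ : ∃ k, n = k + 1 := ⟨n - 1, by omega⟩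
    have hk : 1 ≤ k := by omega
    have hk' : (0 : ℝ) < k := by exact_mod_cast hk
    refine ⟨k, hk, ?_, ?_⟩
    · rw [h]; push_cast; exact le_rfl
    · rw [h]; push_cast
      exact one_div_lt_one_div_of_lt hk' (by linarith)

lemma eq_chord (hf : IsChordFunction f) {n : ℕ} (hn : 1 ≤ n) {x : ℝ}
    (h1 : 1 / ((n : ℝ) + 1) ≤ |x|) (h2 : |x| ≤ 1 / (n : ℝ)) :
    f x = (1 / (n : ℝ) + 1 / ((n : ℝ) + 1)) * |x| - 1 / (n : ℝ) * (1 / ((n : ℝ) + 1)) := by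
  have hn' : (0 : ℝ) < n := by exact_mod_cast hn
  rcases h1.eq_or_lt with h | h
  · rw [hf.sq (n + 1) (by omega) x (by rw [← h]; push_cast; rfl), ← sq_abs, ← h]
    ring
  rcases h2.eq_or_lt with h' | h'
  · rw [hf.sq n hn x h', ← sq_abs, h']
    ring
  rw [hf.lin n hn x h h']
  field_simp
  ring

lemma sq_le_f (hf : IsChordFunction f) {x : ℝ} (hx : |x| ≤ 1) : x ^ 2 ≤ f x := by
  rcases eq_or_ne x 0 with rfl | h
  · simp [hf.zero]
  obtain ⟨n, hn, h1, h2⟩ := exists_bracket (abs_pos.2 h) hx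
  rw [hf.eq_chord hn h1.le h2, ← sq_abs]
  nlinarith [mul_nonneg (sub_nonneg.2 h1.le) (sub_nonneg.2 h2)]

lemma chord_le_f (hf : IsChordFunction f) {m : ℕ} (hm : 1 ≤ m) {x : ℝ} (hx : |x| ≤ 1) :
    (1 / (m : ℝ) + 1 / ((m : ℝ) + 1)) * |x| - 1 / (m : ℝ) * (1 / ((m : ℝ) + 1)) ≤ f x := by
  have hm' : (0 : ℝ) < m := by exact_mod_cast hm
  have hd : 1 / ((m : ℝ) + 1) ≤ 1 / (m : ℝ) := one_div_le_one_div_of_le hm' (by linarith)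
  have hs := hf.sq_le_f hx
  rw [← sq_abs] at hs
  rcases le_total |x| (1 / ((m : ℝ) + 1)) with h | h
  · nlinarith [mul_nonneg (sub_nonneg.2 h) (sub_nonneg.2 (h.trans hd))]
  rcases le_total |x| (1 / (m : ℝ)) with h' | h'
  · exact (hf.eq_chord hm h h').ge
  · nlinarith [mul_nonneg (sub_nonneg.2 h) (sub_nonneg.2 h')]

lemma exists_subgradient (hf : IsChordFunction f) {z : ℝ} (hz : |z| ≤ 1) :
    ∃ v : ℝ, ∀ y : ℝ, |y| ≤ 1 → f z + v * (y - z) ≤ f y := by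
  rcases eq_or_ne z 0 with rfl | h
  · refine ⟨0, fun y hy => ?_⟩
    have := hf.sq_le_f hy
    rw [hf.zero]
    nlinarith [sq_nonneg y]
  obtain ⟨n, hn, h1, h2⟩ := exists_bracket (abs_pos.2 h) hz
  have hz := hf.eq_chord hn h1.le h2
  have hs : 0 ≤ 1 / (n : ℝ) + 1 / ((n : ℝ) + 1) := by positivity
  set s := 1 / (n : ℝ) + 1 / ((n : ℝ) + 1)
  rcases abs_cases z with ⟨ha, -⟩ | ⟨ha, -⟩
  · refine ⟨s, fun y hy => ?_⟩
    have := hf.chord_le_f hn hy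
    have := mul_le_mul_of_nonneg_left (le_abs_self y) hs
    rw [hz, ha]
    linarith
  · refine ⟨-s, fun y hy => ?_⟩
    have := hf.chord_le_f hn hy
    have := mul_le_mul_of_nonneg_left (neg_abs_le y) hs
    rw [hz, ha]
    linarith

lemma convexOn (hf : IsChordFunction f) : ConvexOn ℝ (Set.Icc (-1 : ℝ) 1) f := by
  refine ⟨convex_Icc _ _, fun x hx y hy a b ha hb hab => ?_⟩
  have hz := convex_Icc (-1 : ℝ) 1 hx hy ha hb hab
  obtain ⟨v, hv⟩ := hf.exists_subgradient (abs_le.2 hz)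
  have h1 := mul_le_mul_of_nonneg_left (hv x (abs_le.2 hx)) ha
  have h2 := mul_le_mul_of_nonneg_left (hv y (abs_le.2 hy)) hb
  simp only [smul_eq_mul] at *
  obtain rfl : b = 1 - a := by linarith
  linarith

lemma subgradient_bound_of_pos (hf : IsChordFunction f) {x v : ℝ} (h0 : 0 < x) (h1 : x < 1)
    (hv : ∀ y ∈ Set.Icc (-1 : ℝ) 1, f x + v * (y - x) ≤ f y) :
    |v - 2 * x| ≤ 2 * x * x := by
  have hlow : x ^ 2 ≤ f x := hf.sq_le_f (abs_le.2 ⟨by linarith, h1.le⟩)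
  -- Testing the subgradient inequality at the node `1/k`.
  have test : ∀ k : ℕ, 1 ≤ k → v * (1 / (k : ℝ) - x) ≤ (1 / (k : ℝ) + x) * (1 / (k : ℝ) - x) := by
    intro k hk
    have hk' : (1 : ℝ) ≤ k := by exact_mod_cast hk
    have hp : (0 : ℝ) < 1 / (k : ℝ) := by positivity
    have hle : 1 / (k : ℝ) ≤ 1 := by rw [div_le_one (by linarith)]; exact hk'
    have h := hv (1 / (k : ℝ)) ⟨by linarith, hle⟩
    rw [hf.sq k hk _ (abs_of_pos hp)] at h
    nlinarith
  have gap : ∀ n : ℕ, 1 ≤ n → 1 / ((n : ℝ) + 1) ≤ x →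
      1 / (n : ℝ) - 1 / ((n : ℝ) + 1) ≤ 2 * x * x := by
    intro n hn h
    have hn' : (1 : ℝ) ≤ n := by exact_mod_cast hn
    calc 1 / (n : ℝ) - 1 / ((n : ℝ) + 1) ≤ 2 * (1 / ((n : ℝ) + 1)) * (1 / ((n : ℝ) + 1)) := by
          rw [← sub_nonneg]
          have : 2 * (1 / ((n : ℝ) + 1)) * (1 / ((n : ℝ) + 1)) - (1 / (n : ℝ) - 1 / ((n : ℝ) + 1))
              = (n - 1) / (n * (n + 1) ^ 2) := by
            field_simp
            ring
          rw [this]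
          exact div_nonneg (by linarith) (by positivity)
      _ ≤ 2 * x * x := by gcongr
  rw [abs_le]
  constructor
  · obtain ⟨m, hm, h2, h3⟩ := exists_bracket h0 h1.le
    have t := test (m + 1) (by omega)
    push_cast at t
    have := (mul_le_mul_right_of_neg (sub_neg.2 h2)).1 t
    have := gap m hm h2.le
    linarith
  · obtain ⟨n, hn, h2, h3⟩ := exists_bracket' h0 h1
    have := le_of_mul_le_mul_right (test n hn) (sub_pos.2 h3)
    have := gap n hn h2
    linarith

lemma subgradient_zero (hf : IsChordFunction f) {v : ℝ}
    (hv : ∀ y ∈ Set.Icc (-1 : ℝ) 1, f 0 + v * (y - 0) ≤ f y) : v ≤ 0 := by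
  refine ge_of_tendsto' (tendsto_one_div_add_atTop_nhds_zero_nat (𝕜 := ℝ)) fun n => ?_
  have hp : (0 : ℝ) < 1 / ((n : ℝ) + 1) := by positivity
  have hle : 1 / ((n : ℝ) + 1) ≤ 1 := by
    rw [div_le_one (by positivity)]
    linarith [(Nat.cast_nonneg n : (0 : ℝ) ≤ n)]
  have h := hv (1 / ((n : ℝ) + 1)) ⟨by linarith, hle⟩
  rw [hf.zero, hf.sq (n + 1) (by omega) (1 / ((n : ℝ) + 1))
    (by rw [abs_of_pos hp]; push_cast; rfl)] at h
  exact le_of_mul_le_mul_right (by linarith) hp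

lemma subgradient_bound (hf : IsChordFunction f) {x v : ℝ} (hx : x ∈ Set.Ioo (-1 : ℝ) 1)
    (hv : ∀ y ∈ Set.Icc (-1 : ℝ) 1, f x + v * (y - x) ≤ f y) :
    |v - 2 * x| ≤ 2 * |x| * |x| := by
  -- Reflection turns a subgradient `v` at `x` into a subgradient `-v` at `-x`.
  have hv' : ∀ y ∈ Set.Icc (-1 : ℝ) 1, f (- -x) + -v * (y - -x) ≤ f (-y) := by
    intro y hy
    have := hv (-y) ⟨by linarith [hy.2], by linarith [hy.1]⟩
    rw [neg_neg]
    linarith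
  rcases lt_trichotomy x 0 with h | rfl | h
  · have := hf.comp_neg.subgradient_bound_of_pos (neg_pos.2 h) (by linarith [hx.1]) hv'
    rw [abs_of_neg h]
    rwa [show -v - 2 * -x = -(v - 2 * x) by ring, abs_neg] at this
  · have h1 := hf.subgradient_zero hv
    have h2 := hf.comp_neg.subgradient_zero (v := -v) (by simpa using hv')
    simp [show v = 0 by linarith]
  · rw [abs_of_pos h]
    exact hf.subgradient_bound_of_pos h hx.2 hv

lemma not_differentiableAt (hf : IsChordFunction f) {n : ℕ} (hn : 2 ≤ n) :
    ¬ DifferentiableAt ℝ f (1 / (n : ℝ)) := by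
  intro hd
  have hn' : (2 : ℝ) ≤ n := by exact_mod_cast hn
  have hp : (0 : ℝ) < 1 / (n : ℝ) := by positivity
  have hlt : 1 / (n : ℝ) < 1 := by rw [div_lt_one (by linarith)]; linarith
  have hnhds : ∀ᶠ y in nhds (1 / (n : ℝ)), 0 < y ∧ y < 1 := Ioo_mem_nhds hp hlt
  have hfx := hf.sq n (by omega) _ (abs_of_pos hp)
  set x := 1 / (n : ℝ) with hx
  set d := 1 / ((n : ℝ) + 1) with hdd
  have hdx : d < x := one_div_lt_one_div_of_lt (by linarith) (by linarith)
  have m1 : IsLocalMin (fun y => f y - y ^ 2) x := by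
    filter_upwards [hnhds] with y hy
    have := hf.sq_le_f (abs_le.2 ⟨by linarith, hy.2.le⟩)
    rw [hfx]
    linarith
  have m2 : IsLocalMin (fun y => f y - (x + d) * y) x := by
    filter_upwards [hnhds] with y hy
    have := hf.chord_le_f (m := n) (by omega) (abs_le.2 ⟨by linarith, hy.2.le⟩)
    rw [abs_of_pos hy.1, ← hx, ← hdd] at this
    rw [hfx]
    nlinarith
  have e1 := m1.hasDerivAt_eq_zero (hd.hasDerivAt.sub (hasDerivAt_pow 2 x))
  have e2 := m2.hasDerivAt_eq_zero (hd.hasDerivAt.sub ((hasDerivAt_id x).const_mul (x + d)))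
  norm_num at e1 e2
  linarith

end IsChordFunction

/-- The piecewise function interpolating `x²` at the points `±1/n` is convex, is twice
differentiable at `0` in the generalized sense (with generalized first derivative `0` and
generalized second derivative `2`), but there is no neighborhood of `0` on which it is
differentiable at every point. -/
theorem generalized_second_derivative_example
    (f : ℝ → ℝ) (hf0 : f 0 = 0)
    (hf_sq : ∀ n : ℕ, 1 ≤ n → ∀ x : ℝ, |x| = 1 / (n : ℝ) → f x = x ^ 2)
    (hf_lin : ∀ n : ℕ, 1 ≤ n → ∀ x : ℝ, 1 / ((n : ℝ) + 1) < |x| → |x| < 1 / (n : ℝ) →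
      f x = ((2 * (n : ℝ) + 1) / ((n : ℝ) * ((n : ℝ) + 1))) * |x| - 1 / ((n : ℝ) * ((n : ℝ) + 1))) :
    ConvexOn ℝ (Set.Icc (-1 : ℝ) 1) f ∧
    (∃ Θ : ℝ → ℝ, Monotone Θ ∧
      Filter.Tendsto Θ (nhdsWithin 0 (Set.Ici 0)) (nhds 0) ∧
      ∀ x ∈ Set.Ioo (-1 : ℝ) 1, ∀ v : ℝ,
        (∀ y ∈ Set.Icc (-1 : ℝ) 1, f x + v * (y - x) ≤ f y) →
        |v - 2 * x| ≤ Θ |x| * |x|) ∧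
    ¬ ∃ U ∈ nhds (0 : ℝ), ∀ x ∈ U, DifferentiableAt ℝ f x := by
  have hf : IsChordFunction f := ⟨hf0, hf_sq, hf_lin⟩
  refine ⟨hf.convexOn, ⟨fun t => 2 * t, fun a b h => by dsimp only; linarith, ?_,
    fun x hx v hv => hf.subgradient_bound hx hv⟩, ?_⟩
  · have : Filter.Tendsto (fun t : ℝ => 2 * t) (nhds 0) (nhds (2 * 0)) :=
      (continuous_const_mul 2).tendsto 0
    rw [mul_zero] at this
    exact this.mono_left nhdsWithin_le_nhds
  · rintro ⟨U, hU, hd⟩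
    have hev := (tendsto_one_div_atTop_nhds_zero_nat (𝕜 := ℝ)).eventually hU
    obtain ⟨n, hnU, hn⟩ := (hev.and (Filter.eventually_ge_atTop 2)).exists
    exact hf.not_differentiableAt hn (hd _ hnU)
end

section
/- Let U be a convex open subset of ℝⁿ, f : U → ℝ convex, x₀ ∈ U, and suppose f is twice differentiable at x₀ in the generalized sense with generalized Hesse matrix A, i.e. there exist a vector v₀ that is a subdifferential of f at x₀, a linear map A : ℝⁿ → ℝⁿ, a monotone function Θ : [0,∞) → ℝ with lim_{t→0} Θ(t) = 0, and a neighborhood V ⊆ U of x₀ such that for all x ∈ V and every subdifferential v of f at x, ‖v − v₀ − A(x − x₀)‖₂ ≤ Θ(‖x − x₀‖₂)·‖x − x₀‖₂. Then A is positive semidefinite: ⟨A w, w⟩ ≥ 0 for all w ∈ ℝⁿ. -/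
open scoped InnerProductSpace

/-!
Subgradients of a convex function are monotone: if `v` is a subgradient at `x` and `v₀` one
at `x₀`, then `0 ≤ ⟪v - v₀, x - x₀⟫`. Apply this with `x = x₀ + t w`, `t > 0` small, where a
subgradient exists by `exists_subgradient` (Hahn-Banach applied to the strict epigraph).
Replacing `v - v₀` by `t A w` costs at most `Θ (t ‖w‖) * (t ‖w‖) ^ 2`, so dividing by `t ^ 2`
gives `0 ≤ ⟪A w, w⟫ + Θ (t ‖w‖) * ‖w‖ ^ 2`, and `t → 0⁺` gives the claim.
-/

/-- A convex function on an open set has a subgradient at every point: separate `(x, f x)` from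
the open convex strict epigraph by a hyperplane, which cannot be vertical as `x` is interior. -/
lemma exists_subgradient {E : Type*} [NormedAddCommGroup E] [InnerProductSpace ℝ E]
    [FiniteDimensional ℝ E] {U : Set E} (hUopen : IsOpen U) {f : E → ℝ} (hf : ConvexOn ℝ U f)
    {x : E} (hx : x ∈ U) : ∃ v : E, ∀ y ∈ U, f x + ⟪v, y - x⟫_ℝ ≤ f y := by
  have hopen : IsOpen {p : E × ℝ | p.1 ∈ U ∧ f p.1 < p.2} := by
    have hc : ContinuousOn (fun p : E × ℝ => p.2 - f p.1) (Prod.fst ⁻¹' U) :=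
      continuousOn_snd.sub ((hf.continuousOn hUopen).comp continuousOn_fst fun p hp => hp)
    convert hc.isOpen_inter_preimage (hUopen.preimage continuous_fst) (isOpen_Ioi (a := 0)) using 1
    ext p
    simp
  obtain ⟨g, hg⟩ := geometric_hahn_banach_open_point (x := (x, f x)) hf.convex_strict_epigraph
    hopen (fun h => lt_irrefl _ h.2)
  have hdecomp : ∀ (y : E) (t : ℝ), g (y, t) = g (y, 0) + t * g (0, 1) := by
    intro y t
    rw [← smul_eq_mul, ← map_smul, ← map_add]
    simp
  set c := g (0, 1) with hc
  have hcneg : c < 0 := by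
    have h := hg (x, f x + 1) ⟨hx, by simp⟩
    rw [hdecomp x (f x + 1), hdecomp x (f x)] at h
    linarith
  let L : E →L[ℝ] ℝ := g.comp (ContinuousLinearMap.inl ℝ E ℝ)
  have hL : ∀ y, L y = g (y, 0) := fun y => by simp [L]
  refine ⟨(-c)⁻¹ • (InnerProductSpace.toDual ℝ E).symm L, fun y hy => ?_⟩
  rw [real_inner_smul_left, InnerProductSpace.toDual_symm_apply, map_sub, hL, hL]
  -- The strict separation holds at all heights above `f y`, hence weakly at `f y`.
  refine le_of_forall_gt_imp_ge_of_dense fun t ht => ?_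
  have h := hg (y, t) ⟨hy, ht⟩
  rw [hdecomp y t, hdecomp x (f x)] at h
  have h2 : (-c)⁻¹ * (g (y, 0) - g (x, 0)) ≤ t - f x := by
    rw [inv_mul_le_iff₀ (by linarith)]
    linarith
  linarith

/-- If a convex function is twice differentiable in the generalized sense at a point,
then its generalized Hesse matrix is positive semidefinite. -/
theorem generalized_hessian_posSemidef {n : ℕ}
    (U : Set (EuclideanSpace ℝ (Fin n))) (hUconv : Convex ℝ U) (hUopen : IsOpen U)
    (f : EuclideanSpace ℝ (Fin n) → ℝ) (hf : ConvexOn ℝ U f)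
    (x₀ : EuclideanSpace ℝ (Fin n)) (hx₀ : x₀ ∈ U)
    (v₀ : EuclideanSpace ℝ (Fin n)) (hv₀ : ∀ x ∈ U, f x₀ + ⟪v₀, x - x₀⟫_ℝ ≤ f x)
    (A : EuclideanSpace ℝ (Fin n) →ₗ[ℝ] EuclideanSpace ℝ (Fin n))
    (Θ : ℝ → ℝ) (hΘmono : Monotone Θ)
    (hΘ0 : Filter.Tendsto Θ (nhdsWithin 0 (Set.Ici 0)) (nhds 0))
    (V : Set (EuclideanSpace ℝ (Fin n))) (hV : V ∈ nhds x₀) (hVU : V ⊆ U)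
    (hgen : ∀ x ∈ V, ∀ v : EuclideanSpace ℝ (Fin n),
      (∀ y ∈ U, f x + ⟪v, y - x⟫_ℝ ≤ f y) →
      ‖v - v₀ - A (x - x₀)‖ ≤ Θ ‖x - x₀‖ * ‖x - x₀‖) :
    ∀ w : EuclideanSpace ℝ (Fin n), 0 ≤ ⟪A w, w⟫_ℝ := by
  intro w
  have hpath : Filter.Tendsto (fun t : ℝ => x₀ + t • w) (nhdsWithin 0 (Set.Ioi 0)) (nhds x₀) := by
    have h : Continuous fun t : ℝ => x₀ + t • w := by fun_prop
    simpa using (h.tendsto 0).mono_left nhdsWithin_le_nhds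
  have hscale : Filter.Tendsto (fun t : ℝ => t * ‖w‖) (nhdsWithin 0 (Set.Ioi 0))
      (nhdsWithin 0 (Set.Ici 0)) := by
    refine tendsto_nhdsWithin_iff.2 ⟨?_, ?_⟩
    · have h : Continuous fun t : ℝ => t * ‖w‖ := by fun_prop
      simpa using (h.tendsto 0).mono_left nhdsWithin_le_nhds
    · filter_upwards [self_mem_nhdsWithin] with t ht
      exact mul_nonneg (le_of_lt ht) (norm_nonneg w)
  have hlim : Filter.Tendsto (fun t : ℝ => ⟪A w, w⟫_ℝ + Θ (t * ‖w‖) * ‖w‖ ^ 2)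
      (nhdsWithin 0 (Set.Ioi 0)) (nhds ⟪A w, w⟫_ℝ) := by
    simpa using ((hΘ0.comp hscale).mul_const (‖w‖ ^ 2)).const_add ⟪A w, w⟫_ℝ
  refine ge_of_tendsto hlim ?_
  filter_upwards [self_mem_nhdsWithin, hpath hV] with t ht hxV
  have ht : 0 < t := ht
  have hxU := hVU hxV
  obtain ⟨v, hv⟩ := exists_subgradient hUopen hf hxU
  have hbound := hgen _ hxV v hv
  have h1 := hv x₀ hx₀
  have h2 := hv₀ _ hxU
  rw [sub_add_cancel_left, inner_neg_right, real_inner_smul_right] at h1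
  rw [add_sub_cancel_left, real_inner_smul_right] at h2
  rw [add_sub_cancel_left, norm_smul, Real.norm_of_nonneg ht.le, map_smul] at hbound
  have hmono : 0 ≤ ⟪v, w⟫_ℝ - ⟪v₀, w⟫_ℝ := by
    refine nonneg_of_mul_nonneg_right (a := t) ?_ ht
    linarith
  have hcs := (real_inner_le_norm (v - v₀ - t • A w) w).trans
    (mul_le_mul_of_nonneg_right hbound (norm_nonneg w))
  rw [inner_sub_left, inner_sub_left, real_inner_smul_left] at hcs
  refine nonneg_of_mul_nonneg_right (a := t) ?_ ht
  linarith
end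

section
/- Let K be a convex body in ℝⁿ, let t ≥ 0, and let K_t denote its convex floating body. Let T : ℝⁿ → ℝⁿ be an invertible affine map, T(x) = Lx + b with L ∈ GL(n,ℝ). Then (T(K))_t = T(K_{t/|det L|}). -/
/-!
A halfspace does not change when its normal and its threshold are scaled by the same positive
factor, so the floating body is also the intersection over all *nonzero* normals
(`mem_floatingBody_iff`). In this form the family of halfspaces is visibly preserved by affine
bijections: `{y | c ≤ ⟪y, v⟫}` pulls back under `x ↦ L x + b` to `{x | c - ⟪b, v⟫ ≤ ⟪x, L† v⟫}`,
and `v ↦ L† v` is a bijection of the nonzero vectors. The volume of a cap is multiplied by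
`|det L|` (`volume_affine_cap`), so the caps of volume `t` of the image correspond exactly to the
caps of volume `t / |det L|` of `K`.
-/

open scoped InnerProductSpace

/-- The convex floating body `K_t`: the intersection of all closed halfspaces
`{x : ⟪x,u⟫ ≤ c}` (with `u` a unit vector) such that the complementary halfspace
cuts off a set of volume `t` from `K`. -/
noncomputable def floatingBody {n : ℕ} (K : Set (EuclideanSpace ℝ (Fin n))) (t : ℝ) :
    Set (EuclideanSpace ℝ (Fin n)) :=
  ⋂ (u : EuclideanSpace ℝ (Fin n)) (_ : ‖u‖ = 1) (c : ℝ)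
    (_ : MeasureTheory.volume (K ∩ {x | c ≤ ⟪x, u⟫_ℝ}) = ENNReal.ofReal t),
    {x | ⟪x, u⟫_ℝ ≤ c}

/-- The floating body may be computed with arbitrary nonzero normals instead of unit ones. -/
theorem mem_floatingBody_iff {n : ℕ} (K : Set (EuclideanSpace ℝ (Fin n))) (t : ℝ)
    (x : EuclideanSpace ℝ (Fin n)) :
    x ∈ floatingBody K t ↔ ∀ v : EuclideanSpace ℝ (Fin n), v ≠ 0 → ∀ c : ℝ,
      MeasureTheory.volume (K ∩ {x | c ≤ ⟪x, v⟫_ℝ}) = ENNReal.ofReal t → ⟪x, v⟫_ℝ ≤ c := by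
  simp only [floatingBody, Set.mem_iInter, Set.mem_ofPred_eq]
  constructor
  · intro h v hv c hc
    have hpos : 0 < ‖v‖⁻¹ := inv_pos.2 (norm_pos_iff.2 hv)
    have := h (‖v‖⁻¹ • v) (norm_smul_inv_norm (𝕜 := ℝ) hv) (‖v‖⁻¹ * c) (by
      simpa only [inner_smul_right, mul_le_mul_iff_right₀ hpos] using hc)
    rwa [inner_smul_right, mul_le_mul_iff_right₀ hpos] at this
  · intro h u hu
    exact h u (norm_pos_iff.1 (hu ▸ one_pos))

/-- Caps of the affine image correspond to caps of `K`, with volumes scaled by `|det L|`. The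
vector `w` is the adjoint of `L` applied to `v`. -/
theorem volume_affine_cap {n : ℕ} (K : Set (EuclideanSpace ℝ (Fin n)))
    (L : EuclideanSpace ℝ (Fin n) ≃ₗ[ℝ] EuclideanSpace ℝ (Fin n))
    (b : EuclideanSpace ℝ (Fin n)) {v w : EuclideanSpace ℝ (Fin n)}
    (hadj : ∀ z, ⟪L z, v⟫_ℝ = ⟪z, w⟫_ℝ) (c : ℝ) :
    MeasureTheory.volume (((fun x => L x + b) '' K) ∩ {y | c ≤ ⟪y, v⟫_ℝ}) =
      ENNReal.ofReal |LinearMap.det (L : EuclideanSpace ℝ (Fin n) →ₗ[ℝ]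
        EuclideanSpace ℝ (Fin n))| *
        MeasureTheory.volume (K ∩ {x | c - ⟪b, v⟫_ℝ ≤ ⟪x, w⟫_ℝ}) := by
  have hpre : (fun x => L x + b) ⁻¹' {y | c ≤ ⟪y, v⟫_ℝ} = {x | c - ⟪b, v⟫_ℝ ≤ ⟪x, w⟫_ℝ} := by
    ext x
    simp [inner_add_left, hadj]
  have himg : ∀ S : Set (EuclideanSpace ℝ (Fin n)), (fun x => L x + b) '' S =
      (fun y => y + b) '' ((L : EuclideanSpace ℝ (Fin n) →ₗ[ℝ] EuclideanSpace ℝ (Fin n)) '' S) :=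
    fun S => by simp [Set.image_image]
  rw [← Set.image_inter_preimage, hpre, himg, Set.image_add_right,
    MeasureTheory.measure_preimage_add_right, MeasureTheory.Measure.addHaar_image_linearMap]

/-- Affine equivariance of the convex floating body:
`(T K)_t = T (K_{t/|det L|})` for an invertible affine map `T x = L x + b`. -/
theorem floatingBody_affine_image {n : ℕ}
    (K : Set (EuclideanSpace ℝ (Fin n))) (hKcomp : IsCompact K) (hKconv : Convex ℝ K)
    (hKint : (interior K).Nonempty) (t : ℝ) (ht : 0 ≤ t)
    (L : EuclideanSpace ℝ (Fin n) ≃ₗ[ℝ] EuclideanSpace ℝ (Fin n))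
    (b : EuclideanSpace ℝ (Fin n)) :
    floatingBody ((fun x => L x + b) '' K) t
      = (fun x => L x + b) ''
          floatingBody K (t / |LinearMap.det (L : EuclideanSpace ℝ (Fin n) →ₗ[ℝ]
            EuclideanSpace ℝ (Fin n))|) := by
  have hdet : 0 < |LinearMap.det (L : EuclideanSpace ℝ (Fin n) →ₗ[ℝ]
      EuclideanSpace ℝ (Fin n))| := abs_pos.2 L.isUnit_det'.ne_zero
  have hsurj : Function.Surjective fun x => L x + b := fun y => ⟨L.symm (y - b), by simp⟩
  have hinj : Function.Injective fun x => L x + b := fun x y h => L.injective (by simpa using h)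
  ext y
  obtain ⟨x, rfl⟩ := hsurj y
  rw [hinj.mem_set_image, mem_floatingBody_iff, mem_floatingBody_iff]
  constructor
  · intro h w hw c hc
    -- The halfspace with normal `w` is pulled back from the one with normal `(L⁻¹)† w`.
    set v := (L.symm : EuclideanSpace ℝ (Fin n) →ₗ[ℝ] EuclideanSpace ℝ (Fin n)).adjoint w
      with hv
    have hadj : ∀ z, ⟪L z, v⟫_ℝ = ⟪z, w⟫_ℝ := fun z => by
      simp [hv, LinearMap.adjoint_inner_right]
    have hv0 : v ≠ 0 := by
      intro h0
      have := hadj w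
      rw [h0, inner_zero_right] at this
      exact hw (inner_self_eq_zero.1 this.symm)
    have := h v hv0 (c + ⟪b, v⟫_ℝ) (by
      rw [volume_affine_cap K L b hadj, add_sub_cancel_right, hc, ← ENNReal.ofReal_mul hdet.le,
        mul_div_cancel₀ _ hdet.ne'])
    rw [inner_add_left, hadj] at this
    linarith
  · intro h v hv c hc
    set w := (L : EuclideanSpace ℝ (Fin n) →ₗ[ℝ] EuclideanSpace ℝ (Fin n)).adjoint v
      with hw
    have hadj : ∀ z, ⟪L z, v⟫_ℝ = ⟪z, w⟫_ℝ := fun z => by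
      simp [hw, LinearMap.adjoint_inner_right]
    have hw0 : w ≠ 0 := by
      intro h0
      have := hadj (L.symm v)
      rw [h0, inner_zero_right, L.apply_symm_apply] at this
      exact hv (inner_self_eq_zero.1 this)
    have := h w hw0 (c - ⟪b, v⟫_ℝ) (by
      rw [volume_affine_cap K L b hadj] at hc
      rw [ENNReal.ofReal_div_of_pos hdet, ← hc, mul_comm,
        ENNReal.mul_div_cancel_right (ENNReal.ofReal_pos.2 hdet).ne' ENNReal.ofReal_ne_top])
    rw [inner_add_left, hadj]
    linarith
end

section
/- Let K be a convex body in ℝⁿ and let r : ∂K → ℝ be its rolling function. Then r is upper semicontinuous on ∂K. -/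
/-! Let `r(x) < y` and choose `c` with `r(x) < c < y`.
The pairs `(a, z) ∈ K × K` with `closedBall z ‖a - z‖ ⊆ K` and
`c ≤ ‖a - z‖` form a compact set, because the inclusion of the ball says that
`z + ‖a - z‖ • u ∈ K` for every `u` in the unit ball, a closed condition on `(a, z)`.
Hence the projection of this set to the first factor is closed. It does not contain `x`, so it
misses a neighbourhood of `x`, and every `a ∈ K` outside it has `r(a) ≤ c < y`. -/

/-- The rolling function of a convex body `K`:
`r(x) = sup {‖x − z‖ : z ∈ K and the closed ball around z of radius ‖x − z‖ is in K}`. -/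
noncomputable def rollingFunction {n : ℕ} (K : Set (EuclideanSpace ℝ (Fin n)))
    (x : EuclideanSpace ℝ (Fin n)) : ℝ :=
  sSup {d : ℝ | ∃ z ∈ K, d = ‖x - z‖ ∧ Metric.closedBall z ‖x - z‖ ⊆ K}

/-- The radius varies with the centre here, so the ball is parametrized by the unit ball. -/
lemma isClosed_setOf_closedBall_subset {n : ℕ} {K : Set (EuclideanSpace ℝ (Fin n))}
    (hK : IsClosed K) :
    IsClosed {p : EuclideanSpace ℝ (Fin n) × EuclideanSpace ℝ (Fin n) |
      Metric.closedBall p.2 ‖p.1 - p.2‖ ⊆ K} := by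
  have h : {p : EuclideanSpace ℝ (Fin n) × EuclideanSpace ℝ (Fin n) |
      Metric.closedBall p.2 ‖p.1 - p.2‖ ⊆ K} =
      ⋂ u ∈ Metric.closedBall (0 : EuclideanSpace ℝ (Fin n)) 1,
        {p | p.2 + ‖p.1 - p.2‖ • u ∈ K} := by
    ext ⟨a, z⟩
    simp only [Set.mem_ofPred_eq, Set.mem_iInter]
    rw [← affinity_unitClosedBall (norm_nonneg (a - z)) z]
    constructor
    · intro h u hu
      exact h (Set.vadd_mem_vadd_set (Set.smul_mem_smul_set hu))
    · rintro h _ ⟨_, ⟨u, hu, rfl⟩, rfl⟩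
      exact h u hu
  rw [h]
  exact isClosed_biInter fun u _ => hK.preimage
    (f := fun p : EuclideanSpace ℝ (Fin n) × EuclideanSpace ℝ (Fin n) =>
      p.2 + ‖p.1 - p.2‖ • u) (by fun_prop)

lemma bddAbove_rollingSet {n : ℕ} {K : Set (EuclideanSpace ℝ (Fin n))}
    (hK : IsCompact K) (x : EuclideanSpace ℝ (Fin n)) :
    BddAbove {d : ℝ | ∃ z ∈ K, d = ‖x - z‖ ∧ Metric.closedBall z ‖x - z‖ ⊆ K} := by
  refine (hK.bddAbove_image (f := fun z => ‖x - z‖) (by fun_prop)).mono ?_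
  rintro d ⟨z, hz, rfl, -⟩
  exact ⟨z, hz, rfl⟩

/-- The rolling function of a convex body is upper semicontinuous on the boundary. -/
theorem rollingFunction_upperSemicontinuousOn {n : ℕ}
    (K : Set (EuclideanSpace ℝ (Fin n))) (hKcomp : IsCompact K) (hKconv : Convex ℝ K)
    (hKint : (interior K).Nonempty) :
    UpperSemicontinuousOn (rollingFunction K) (frontier K) := by
  intro x _ y hy
  obtain ⟨c, hxc, hcy⟩ := exists_between hy
  have hT : IsCompact ((K ×ˢ K) ∩
      ({p : EuclideanSpace ℝ (Fin n) × EuclideanSpace ℝ (Fin n) |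
        Metric.closedBall p.2 ‖p.1 - p.2‖ ⊆ K} ∩ {p | c ≤ ‖p.1 - p.2‖})) :=
    (hKcomp.prod hKcomp).inter_right
      ((isClosed_setOf_closedBall_subset hKcomp.isClosed).inter
        (isClosed_le continuous_const (by fun_prop)))
  have hP := (hT.image continuous_fst).isClosed
  have hxP : x ∈ (Prod.fst '' ((K ×ˢ K) ∩
      ({p : EuclideanSpace ℝ (Fin n) × EuclideanSpace ℝ (Fin n) |
        Metric.closedBall p.2 ‖p.1 - p.2‖ ⊆ K} ∩ {p | c ≤ ‖p.1 - p.2‖})))ᶜ := by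
    rintro ⟨⟨a, z⟩, ⟨⟨-, hz⟩, hball, hc⟩, rfl⟩
    exact absurd (hc.trans (le_csSup (bddAbove_rollingSet hKcomp a) ⟨z, hz, rfl, hball⟩))
      (not_le.2 hxc)
  filter_upwards [mem_nhdsWithin_of_mem_nhds (hP.isOpen_compl.mem_nhds hxP),
    self_mem_nhdsWithin] with a haP ha
  have haK : a ∈ K := hKcomp.isClosed.frontier_subset ha
  refine lt_of_le_of_lt (csSup_le ?_ ?_) hcy
  -- The centre `z = a` gives the degenerate ball `{a}`, so the supremum is not over `∅`.
  · exact ⟨_, a, haK, rfl, by simpa using haK⟩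
  · rintro d ⟨z, hz, rfl, hball⟩
    by_contra hd
    exact haP ⟨(a, z), ⟨⟨haK, hz⟩, hball, (not_le.1 hd).le⟩, rfl⟩
end

section
/- Let K ⊆ ℝ² be the convex hull of the compact set {(0,0)} ∪ {(1/n, 1/n²) : n ∈ ℕ, n ≥ 1} ∪ {(−1/n, 1/n²) : n ∈ ℕ, n ≥ 1}, and let r be its rolling function. Then for every n ≥ 1 the point (1/n, 1/n²) belongs to ∂K and r((1/n, 1/n²)) = 0, while (0,0) ∈ ∂K and r((0,0)) ≥ 1/2. In particular, r is not continuous at (0,0). -/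
/-- The point `(a, b)` of the Euclidean plane. -/
noncomputable def pt (a b : ℝ) : EuclideanSpace ℝ (Fin 2) :=
  (WithLp.equiv 2 (Fin 2 → ℝ)).symm ![a, b]

/-- The points `(0,0)` and `(±1/n, 1/n²)`, `n ≥ 1`, whose convex hull is studied. -/
def generators : Set (EuclideanSpace ℝ (Fin 2)) :=
  {v | v = pt 0 0 ∨ ∃ n : ℕ, 1 ≤ n ∧
      (v = pt (1 / (n : ℝ)) (1 / (n : ℝ) ^ 2) ∨ v = pt (-(1 / (n : ℝ))) (1 / (n : ℝ) ^ 2))}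

lemma pt_zero (a b : ℝ) : pt a b 0 = a := rfl

lemma pt_one (a b : ℝ) : pt a b 1 = b := rfl

lemma eq_pt (v : EuclideanSpace ℝ (Fin 2)) : v = pt (v 0) (v 1) := by
  ext i; fin_cases i <;> rfl

lemma combo_pt (s t a b c d : ℝ) :
    s • pt a b + t • pt c d = pt (s * a + t * c) (s * b + t * d) := by
  ext i; fin_cases i <;> rfl

lemma norm_sq_eq (v : EuclideanSpace ℝ (Fin 2)) : ‖v‖ ^ 2 = v 0 ^ 2 + v 1 ^ 2 := by
  simp [EuclideanSpace.norm_sq_eq, Fin.sum_univ_two]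

lemma convexHull_generators_subset (m₀ m₁ c : ℝ)
    (h : ∀ v ∈ generators, c ≤ m₀ * v 0 + m₁ * v 1) :
    ∀ v ∈ convexHull ℝ generators, c ≤ m₀ * v 0 + m₁ * v 1 := by
  have hc : Convex ℝ {v : EuclideanSpace ℝ (Fin 2) | c ≤ m₀ * v 0 + m₁ * v 1} := by
    intro x hx y hy s t hs ht hst
    simp only [Set.mem_ofPred_eq, PiLp.add_apply, PiLp.smul_apply, smul_eq_mul] at *
    have e : c = s * c + t * c := by rw [← add_mul, hst, one_mul]
    nlinarith [mul_le_mul_of_nonneg_left hx hs, mul_le_mul_of_nonneg_left hy ht]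
  exact convexHull_min h hc

/-- If a closed disc with `x` on its circle lies in a half-plane with `x` on its boundary line, then
the radius vector at `x` is parallel to the normal `(m₀, m₁)`. -/
lemma cross_eq_zero (m₀ m₁ : ℝ) (x z : EuclideanSpace ℝ (Fin 2))
    (h : ∀ v ∈ Metric.closedBall z ‖x - z‖, m₀ * x 0 + m₁ * x 1 ≤ m₀ * v 0 + m₁ * v 1) :
    m₀ * (z 1 - x 1) - m₁ * (z 0 - x 0) = 0 := by
  rcases eq_or_ne (‖pt m₀ m₁‖) 0 with hm | hm
  · have h2 := norm_sq_eq (pt m₀ m₁)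
    rw [hm, pt_zero, pt_one] at h2
    have h0 : m₀ = 0 := by nlinarith [sq_nonneg m₀, sq_nonneg m₁]
    have h1 : m₁ = 0 := by nlinarith [sq_nonneg m₀, sq_nonneg m₁]
    simp [h0, h1]
  have hm' : 0 < ‖pt m₀ m₁‖ := lt_of_le_of_ne (norm_nonneg _) hm.symm
  -- the point of the disc minimising the linear functional with coefficients `m₀, m₁`
  have key := h (z - (‖x - z‖ / ‖pt m₀ m₁‖) • pt m₀ m₁) (by
    rw [Metric.mem_closedBall, dist_eq_norm, sub_sub_cancel_left, norm_neg, norm_smul,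
      Real.norm_of_nonneg (by positivity), div_mul_cancel₀ _ hm])
  simp only [PiLp.sub_apply, PiLp.smul_apply, smul_eq_mul, pt_zero, pt_one] at key
  have hM := norm_sq_eq (pt m₀ m₁)
  have hR := norm_sq_eq (x - z)
  simp only [PiLp.sub_apply, pt_zero, pt_one] at hM hR
  set M := ‖pt m₀ m₁‖
  set R := ‖x - z‖
  have hRn : 0 ≤ R := norm_nonneg _
  have e : R / M * (m₀ ^ 2 + m₁ ^ 2) = R * M := by
    rw [← hM]; field_simp
  have k2 : R * M ≤ m₀ * (z 0 - x 0) + m₁ * (z 1 - x 1) := by linarith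
  have k3 : (R * M) ^ 2 ≤ (m₀ * (z 0 - x 0) + m₁ * (z 1 - x 1)) ^ 2 :=
    pow_le_pow_left₀ (by positivity) k2 2
  rw [mul_pow, hM, hR] at k3
  have k4 : (m₀ * (z 1 - x 1) - m₁ * (z 0 - x 0)) ^ 2 ≤ 0 := by linarith
  exact pow_eq_zero_iff two_ne_zero |>.1 (le_antisymm k4 (sq_nonneg _))

lemma mem_frontier_of_halfplane (m₀ m₁ : ℝ) (hm : m₁ ≠ 0) (K : Set (EuclideanSpace ℝ (Fin 2)))
    (x : EuclideanSpace ℝ (Fin 2)) (hx : x ∈ K)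
    (h : ∀ v ∈ K, m₀ * x 0 + m₁ * x 1 ≤ m₀ * v 0 + m₁ * v 1) : x ∈ frontier K := by
  refine ⟨subset_closure hx, fun hi => ?_⟩
  have ht : Filter.Tendsto (fun t : ℝ => x - t • pt 0 m₁) (nhdsWithin 0 (Set.Ioi 0)) (nhds x) := by
    have : Continuous (fun t : ℝ => x - t • pt 0 m₁) := by fun_prop
    simpa using (this.tendsto 0).mono_left nhdsWithin_le_nhds
  obtain ⟨t, htK, ht0⟩ :=
    ((ht.eventually (mem_interior_iff_mem_nhds.1 hi)).and self_mem_nhdsWithin).exists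
  have := h _ htK
  simp only [PiLp.sub_apply, PiLp.smul_apply, smul_eq_mul, pt_zero, pt_one] at this
  have : 0 < t * m₁ ^ 2 := mul_pos ht0 (by positivity)
  nlinarith

lemma rollingFunction_eq_zero {K : Set (EuclideanSpace ℝ (Fin 2))}
    {x : EuclideanSpace ℝ (Fin 2)} (hx : x ∈ K)
    (h : ∀ z, Metric.closedBall z ‖x - z‖ ⊆ K → z = x) : rollingFunction K x = 0 := by
  have : {d : ℝ | ∃ z ∈ K, d = ‖x - z‖ ∧ Metric.closedBall z ‖x - z‖ ⊆ K} = {0} := by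
    ext d
    constructor
    · rintro ⟨z, -, rfl, hz⟩
      simp [h z hz]
    · rintro rfl
      exact ⟨x, hx, by simp, by simpa using hx⟩
  rw [rollingFunction, this, csSup_singleton]

/-- The half-plane above the chord over `[1/(n+1), 1/n]` contains the hull. -/
lemma chord_halfplane (n : ℕ) (hn : 1 ≤ n) :
    ∀ v ∈ convexHull ℝ generators, -(1 / (n : ℝ) * (1 / ((n : ℝ) + 1))) ≤
      -(1 / (n : ℝ) + 1 / ((n : ℝ) + 1)) * v 0 + 1 * v 1 := by
  apply convexHull_generators_subset
  have hn0 : (0 : ℝ) < n := by exact_mod_cast hn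
  have ha : 0 < 1 / (n : ℝ) := by positivity
  have hb : 0 < 1 / ((n : ℝ) + 1) := by positivity
  have hba : 1 / ((n : ℝ) + 1) ≤ 1 / (n : ℝ) := one_div_le_one_div_of_le hn0 (by linarith)
  rintro v (rfl | ⟨k, hk, rfl | rfl⟩)
  · simp only [pt_zero, pt_one]
    nlinarith [mul_pos ha hb]
  · have hk0 : (0 : ℝ) < k := by exact_mod_cast hk
    simp only [pt_zero, pt_one]
    have e : 1 / (k : ℝ) ^ 2 = (1 / (k : ℝ)) ^ 2 := by rw [one_div_pow]
    rw [e]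
    rcases Nat.lt_or_ge n k with h | h
    · have hk1 : (n : ℝ) + 1 ≤ k := by exact_mod_cast h
      have : 1 / (k : ℝ) ≤ 1 / ((n : ℝ) + 1) := one_div_le_one_div_of_le (by positivity) hk1
      nlinarith
    · have hk1 : (k : ℝ) ≤ n := by exact_mod_cast h
      have : 1 / (n : ℝ) ≤ 1 / (k : ℝ) := one_div_le_one_div_of_le hk0 hk1
      nlinarith
  · have hk0 : (0 : ℝ) < k := by exact_mod_cast hk
    have hc : 0 < 1 / (k : ℝ) := by positivity
    simp only [pt_zero, pt_one]
    have e : 1 / (k : ℝ) ^ 2 = (1 / (k : ℝ)) ^ 2 := by rw [one_div_pow]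
    rw [e]
    nlinarith [mul_pos ha hb, mul_pos ha hc, mul_pos hb hc, sq_nonneg (1 / (k : ℝ))]

lemma top_halfplane :
    ∀ v ∈ convexHull ℝ generators, -1 ≤ (0 : ℝ) * v 0 + (-1) * v 1 := by
  apply convexHull_generators_subset
  have key : ∀ k : ℕ, 1 ≤ k → 1 / (k : ℝ) ^ 2 ≤ 1 := by
    intro k hk
    have : (1 : ℝ) ≤ k := by exact_mod_cast hk
    exact (div_le_one (by positivity)).2 (by nlinarith)
  rintro v (rfl | ⟨k, hk, rfl | rfl⟩)
  · simp only [pt_one]; norm_num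
  · simp only [pt_one]; linarith [key k hk]
  · simp only [pt_one]; linarith [key k hk]

lemma bottom_halfplane :
    ∀ v ∈ convexHull ℝ generators, 0 ≤ (0 : ℝ) * v 0 + 1 * v 1 := by
  apply convexHull_generators_subset
  rintro v (rfl | ⟨k, hk, rfl | rfl⟩) <;> simp only [pt_one, zero_mul, one_mul, zero_add]
  · rfl
  · positivity
  · positivity

lemma isBounded_hull : Bornology.IsBounded (convexHull ℝ generators) := by
  refine (isBounded_convexHull).2 (Metric.isBounded_closedBall.subset
    (?_ : generators ⊆ Metric.closedBall (0 : EuclideanSpace ℝ (Fin 2)) 2))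
  have key : ∀ k : ℕ, 1 ≤ k → 0 ≤ 1 / (k : ℝ) ∧ 1 / (k : ℝ) ≤ 1 := by
    intro k hk
    have : (1 : ℝ) ≤ k := by exact_mod_cast hk
    exact ⟨by positivity, (div_le_one (by positivity)).2 this⟩
  intro v hv
  rw [mem_closedBall_zero_iff]
  have h2 : v 0 ^ 2 ≤ 1 ∧ v 1 ^ 2 ≤ 1 := by
    rcases hv with rfl | ⟨k, hk, rfl | rfl⟩ <;> simp only [pt_zero, pt_one]
    · norm_num
    · rw [← one_div_pow]
      obtain ⟨h0, h1⟩ := key k hk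
      exact ⟨pow_le_one₀ h0 h1, pow_le_one₀ (by positivity) (pow_le_one₀ h0 h1)⟩
    · rw [← one_div_pow, neg_sq]
      obtain ⟨h0, h1⟩ := key k hk
      exact ⟨pow_le_one₀ h0 h1, pow_le_one₀ (by positivity) (pow_le_one₀ h0 h1)⟩
  have := norm_sq_eq v
  nlinarith [norm_nonneg v]

/-- The disc with centre `(0, 1/2)` and radius `1/2`, that is `u² + v² ≤ v`, lies above every line
`y = (a + b) x - a b` with `a, b > 0` and `a - b = a b`, by the Cauchy–Schwarz inequality. -/
lemma chord_le_of_mem_disc (a b u v : ℝ) (ha : 0 < a) (hb : 0 < b) (hab : a - b = a * b)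
    (h : u ^ 2 + v ^ 2 ≤ v) : (a + b) * u - a * b ≤ v := by
  by_contra! hlt
  have hp : 0 < a * b := mul_pos ha hb
  have hs : (a + b) ^ 2 = (a * b) ^ 2 + 4 * (a * b) := by rw [← hab]; linarith [hab]
  have h1 : a * b + 1 / 2 < (a + b) * u - (v - 1 / 2) := by linarith
  have h2 : (a * b + 1 / 2) ^ 2 < ((a + b) * u - (v - 1 / 2)) ^ 2 :=
    pow_lt_pow_left₀ h1 (by positivity) two_ne_zero
  have h3 : ((a + b) * u - (v - 1 / 2)) ^ 2 ≤ ((a + b) ^ 2 + 1) * (u ^ 2 + (v - 1 / 2) ^ 2) := by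
    nlinarith [sq_nonneg ((a + b) * (v - 1 / 2) + u)]
  have h4 : ((a + b) ^ 2 + 1) * (u ^ 2 + (v - 1 / 2) ^ 2) ≤ ((a + b) ^ 2 + 1) * (1 / 4) :=
    mul_le_mul_of_nonneg_left (by nlinarith) (by positivity)
  nlinarith [sq_nonneg (a * b)]

lemma pt_generator_mem (σ : ℝ) (hσ : σ = 1 ∨ σ = -1) (n : ℕ) (hn : 1 ≤ n) :
    pt (σ * (1 / (n : ℝ))) ((1 / (n : ℝ)) ^ 2) ∈ convexHull ℝ generators := by
  apply subset_convexHull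
  refine Or.inr ⟨n, hn, ?_⟩
  rw [one_div_pow]
  rcases hσ with rfl | rfl
  · left; rw [one_mul]
  · right; rw [neg_one_mul]

lemma pt_between {K : Set (EuclideanSpace ℝ (Fin 2))} (hK : Convex ℝ K) {a b c d t : ℝ}
    (h₁ : pt a b ∈ K) (h₂ : pt c d ∈ K) (h0 : 0 ≤ t) (h1 : t ≤ 1) :
    pt ((1 - t) * a + t * c) ((1 - t) * b + t * d) ∈ K := by
  rw [← combo_pt]
  exact hK h₁ h₂ (by linarith) h0 (by ring)

lemma vertical {K : Set (EuclideanSpace ℝ (Fin 2))} (hK : Convex ℝ K) {u p q v : ℝ}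
    (h₁ : pt u p ∈ K) (h₂ : pt u q ∈ K) (hp : p ≤ v) (hq : v ≤ q) : pt u v ∈ K := by
  rcases eq_or_lt_of_le (hp.trans hq) with h | h
  · have : v = p := by linarith
    rwa [this]
  · have hd : q - p ≠ 0 := by linarith
    have := pt_between hK h₁ h₂ (t := (v - p) / (q - p))
      (div_nonneg (by linarith) (by linarith)) ((div_le_one (by linarith)).2 (by linarith))
    convert this using 2 <;> field_simp <;> ring

lemma pt_disc_mem (σ u v : ℝ) (hσ : σ = 1 ∨ σ = -1) (hu : 0 ≤ u) (h : u ^ 2 + v ^ 2 ≤ v) :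
    pt (σ * u) v ∈ convexHull ℝ generators := by
  have hK := convex_convexHull ℝ generators
  have hv0 : 0 ≤ v := by nlinarith [sq_nonneg u, sq_nonneg v]
  have hv1 : v ≤ 1 := by nlinarith [sq_nonneg u, sq_nonneg v]
  have hu1 : u ≤ 1 := by nlinarith [sq_nonneg u, sq_nonneg v]
  have htop : pt (σ * u) 1 ∈ convexHull ℝ generators := by
    have h₁ := pt_generator_mem (-σ) (by rcases hσ with rfl | rfl <;> simp) 1 le_rfl
    have h₂ := pt_generator_mem σ hσ 1 le_rfl
    have := pt_between hK h₁ h₂ (t := (1 + u) / 2) (by linarith) (by linarith)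
    convert this using 2 <;> norm_num <;> ring
  rcases eq_or_lt_of_le hu with rfl | hu0
  · refine vertical hK (p := 0) (subset_convexHull ℝ _ (Or.inl ?_)) htop hv0 hv1
    rw [mul_zero]
  -- `n` is chosen so that `1/(n+1) < u ≤ 1/n`
  obtain ⟨n, hn⟩ : ∃ n, n = ⌊1 / u⌋₊ := ⟨_, rfl⟩
  have hn1 : 1 ≤ n := by
    rw [hn]; exact Nat.le_floor (by rw [Nat.cast_one]; exact (one_le_div hu0).2 hu1)
  have hnR : (0 : ℝ) < n := by exact_mod_cast hn1
  have hle : (n : ℝ) ≤ 1 / u := by rw [hn]; exact Nat.floor_le (by positivity)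
  have hlt : 1 / u < (n : ℝ) + 1 := by rw [hn]; exact Nat.lt_floor_add_one _
  have hua : u ≤ 1 / (n : ℝ) := (le_one_div hu0 hnR).2 hle
  have hub : 1 / ((n : ℝ) + 1) ≤ u := ((one_div_lt (by positivity) hu0).2 hlt).le
  have h₁ := pt_generator_mem σ hσ n hn1
  have h₂ := pt_generator_mem σ hσ (n + 1) (by omega)
  rw [Nat.cast_succ] at h₂
  have ha : 0 < 1 / (n : ℝ) := by positivity
  have hb : 0 < 1 / ((n : ℝ) + 1) := by positivity
  have hab : 1 / (n : ℝ) - 1 / ((n : ℝ) + 1) = 1 / (n : ℝ) * (1 / ((n : ℝ) + 1)) := by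
    field_simp; ring
  generalize 1 / (n : ℝ) = a at *
  generalize 1 / ((n : ℝ) + 1) = b at *
  have hd : 0 < a - b := by rw [hab]; positivity
  have hd' : a - b ≠ 0 := hd.ne'
  refine vertical hK (p := (a + b) * u - a * b) ?_ htop
    (chord_le_of_mem_disc a b u v ha hb hab h) hv1
  have := pt_between hK h₁ h₂ (t := (a - u) / (a - b)) (div_nonneg (by linarith) hd.le)
    ((div_le_one hd).2 (by linarith))
  convert this using 2 <;> field_simp <;> ring

lemma closedBall_subset_hull :
    Metric.closedBall (pt 0 (1 / 2)) (1 / 2) ⊆ convexHull ℝ generators := by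
  intro p hp
  rw [Metric.mem_closedBall, dist_eq_norm] at hp
  have h2 := norm_sq_eq (p - pt 0 (1 / 2))
  have h3 : ‖p - pt 0 (1 / 2)‖ ^ 2 ≤ (1 / 2) ^ 2 := pow_le_pow_left₀ (norm_nonneg _) hp 2
  rw [h2] at h3
  simp only [PiLp.sub_apply, pt_zero, pt_one] at h3
  have h4 : p 0 ^ 2 + p 1 ^ 2 ≤ p 1 := by nlinarith
  rw [eq_pt p]
  rcases le_total 0 (p 0) with h | h
  · simpa using pt_disc_mem 1 (p 0) (p 1) (Or.inl rfl) h h4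
  · simpa using pt_disc_mem (-1) (-p 0) (p 1) (Or.inr rfl) (by linarith) (by simpa using h4)

lemma half_le_rollingFunction :
    1 / 2 ≤ rollingFunction (convexHull ℝ generators) (pt 0 0) := by
  have hn : ‖pt 0 0 - pt 0 (1 / 2)‖ = 1 / 2 := by
    have h := norm_sq_eq (pt 0 0 - pt 0 (1 / 2))
    simp only [PiLp.sub_apply, pt_zero, pt_one] at h
    nlinarith [norm_nonneg (pt 0 0 - pt 0 (1 / 2))]
  refine le_csSup ?_ ⟨pt 0 (1 / 2),
    closedBall_subset_hull (Metric.mem_closedBall_self (by norm_num)),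
    hn.symm, by rw [hn]; exact closedBall_subset_hull⟩
  obtain ⟨C, hC⟩ := isBounded_hull.exists_norm_le
  refine ⟨‖pt 0 0‖ + C, ?_⟩
  rintro d ⟨z, hz, rfl, -⟩
  exact (norm_sub_le _ _).trans (by linarith [hC z hz])

lemma chord_halfplane_eq_left (n : ℕ) :
    -(1 / (n : ℝ) * (1 / ((n : ℝ) + 1))) =
      -(1 / (n : ℝ) + 1 / ((n : ℝ) + 1)) * (1 / (n : ℝ)) + 1 * (1 / (n : ℝ) ^ 2) := by
  rw [← one_div_pow]; ring

lemma chord_halfplane_eq_right (n : ℕ) :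
    -(1 / (n : ℝ) * (1 / ((n : ℝ) + 1))) =
      -(1 / (n : ℝ) + 1 / ((n : ℝ) + 1)) * (1 / ((n : ℝ) + 1)) + 1 * (1 / ((n : ℝ) + 1) ^ 2) := by
  rw [← one_div_pow]; ring

lemma pt_mem_frontier (n : ℕ) (hn : 1 ≤ n) :
    pt (1 / (n : ℝ)) (1 / (n : ℝ) ^ 2) ∈ frontier (convexHull ℝ generators) := by
  refine mem_frontier_of_halfplane (-(1 / (n : ℝ) + 1 / ((n : ℝ) + 1))) 1 one_ne_zero _ _
    (subset_convexHull ℝ _ (Or.inr ⟨n, hn, Or.inl rfl⟩)) fun v hv => ?_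
  rw [pt_zero, pt_one, ← chord_halfplane_eq_left]
  exact chord_halfplane n hn v hv

lemma rollingFunction_pt (n : ℕ) (hn : 1 ≤ n) :
    rollingFunction (convexHull ℝ generators) (pt (1 / (n : ℝ)) (1 / (n : ℝ) ^ 2)) = 0 := by
  refine rollingFunction_eq_zero (subset_convexHull ℝ _ (Or.inr ⟨n, hn, Or.inl rfl⟩)) ?_
  intro z hz
  have hn0 : (0 : ℝ) < n := by exact_mod_cast hn
  have c₁ := cross_eq_zero (-(1 / (n : ℝ) + 1 / ((n : ℝ) + 1))) 1 _ z fun v hv => by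
    rw [pt_zero, pt_one, ← chord_halfplane_eq_left]
    exact chord_halfplane n hn v (hz hv)
  suffices h : z 0 = 1 / (n : ℝ) ∧ z 1 = 1 / (n : ℝ) ^ 2 by
    rw [eq_pt z, h.1, h.2]
  rw [pt_zero, pt_one] at c₁
  obtain ⟨k, rfl⟩ : ∃ k, n = k + 1 := ⟨n - 1, by omega⟩
  -- the second supporting line is `y = 1` for `n = 1`, and the chord to the right otherwise
  rcases Nat.eq_zero_or_pos k with rfl | hk
  · have c₂ := cross_eq_zero 0 (-1) _ z fun v hv => by
      have := top_halfplane v (hz hv)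
      rw [pt_one]
      norm_num at this ⊢
      exact this
    rw [pt_zero, pt_one] at c₂
    norm_num at c₁ c₂ ⊢
    constructor <;> linarith
  · have hk0 : (0 : ℝ) < k := by exact_mod_cast hk
    have c₂ := cross_eq_zero (-(1 / (k : ℝ) + 1 / ((k : ℝ) + 1))) 1
        (pt (1 / ((k + 1 : ℕ) : ℝ)) (1 / ((k + 1 : ℕ) : ℝ) ^ 2)) z fun v hv => by
      rw [pt_zero, pt_one, Nat.cast_succ, ← chord_halfplane_eq_right]
      exact chord_halfplane k hk v (hz hv)
    rw [pt_zero, pt_one] at c₂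
    rw [Nat.cast_succ] at *
    have hlt : 1 / ((k : ℝ) + 1 + 1) < 1 / (k : ℝ) :=
      one_div_lt_one_div_of_lt hk0 (by linarith)
    have h1 : (1 / (k : ℝ) - 1 / ((k : ℝ) + 1 + 1)) * (z 1 - 1 / ((k : ℝ) + 1) ^ 2) = 0 := by
      linarith
    have h2 : z 1 - 1 / ((k : ℝ) + 1) ^ 2 = 0 :=
      (mul_eq_zero.1 h1).resolve_left (by linarith)
    rw [h2] at c₁
    constructor <;> linarith

lemma tendsto_pt :
    Filter.Tendsto (fun n : ℕ => pt (1 / ((n + 1 : ℕ) : ℝ)) (1 / ((n + 1 : ℕ) : ℝ) ^ 2))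
      Filter.atTop (nhds (pt 0 0)) := by
  have h : Filter.Tendsto (fun n : ℕ => 1 / ((n + 1 : ℕ) : ℝ)) Filter.atTop (nhds 0) := by
    simpa using tendsto_one_div_add_atTop_nhds_zero_nat (𝕜 := ℝ)
  have hc : Continuous (fun t : ℝ => t • pt 1 0 + t ^ 2 • pt 0 1) := by fun_prop
  have h2 := (hc.tendsto 0).comp h
  simp only [combo_pt] at h2
  convert h2 using 2
  · simp
  · norm_num

/-- For the convex hull of `{(0,0)} ∪ {(±1/n, 1/n²) : n ≥ 1}`, the rolling function
vanishes at every point `(1/n, 1/n²)` but is at least `1/2` at `(0,0)`; in particular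
it is not continuous at `(0,0)`. -/
theorem rollingFunction_not_continuous_example
    (K : Set (EuclideanSpace ℝ (Fin 2)))
    (hK : K = convexHull ℝ {v | v = pt 0 0 ∨ ∃ n : ℕ, 1 ≤ n ∧
      (v = pt (1 / (n : ℝ)) (1 / (n : ℝ) ^ 2) ∨ v = pt (-(1 / (n : ℝ))) (1 / (n : ℝ) ^ 2))}) :
    (∀ n : ℕ, 1 ≤ n →
      pt (1 / (n : ℝ)) (1 / (n : ℝ) ^ 2) ∈ frontier K ∧
      rollingFunction K (pt (1 / (n : ℝ)) (1 / (n : ℝ) ^ 2)) = 0) ∧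
    pt 0 0 ∈ frontier K ∧
    1 / 2 ≤ rollingFunction K (pt 0 0) ∧
    ¬ ContinuousWithinAt (rollingFunction K) (frontier K) (pt 0 0) := by
  change K = convexHull ℝ generators at hK
  subst hK
  have h0 : pt 0 0 ∈ frontier (convexHull ℝ generators) :=
    mem_frontier_of_halfplane 0 1 one_ne_zero _ _ (subset_convexHull ℝ _ (Or.inl rfl))
      fun v hv => by simpa [pt_one] using bottom_halfplane v hv
  refine ⟨fun n hn => ⟨pt_mem_frontier n hn, rollingFunction_pt n hn⟩, h0,
    half_le_rollingFunction, fun hcont => ?_⟩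
  have hlim := hcont.tendsto.comp (tendsto_nhdsWithin_iff.2
    ⟨tendsto_pt, Filter.Eventually.of_forall fun n => pt_mem_frontier (n + 1) (by omega)⟩)
  have hz := hlim.congr fun n => rollingFunction_pt (n + 1) (by omega)
  have := tendsto_nhds_unique hz tendsto_const_nhds
  linarith [half_le_rollingFunction]
end

section
/- Let K be a convex body in ℝⁿ with B₂ⁿ ⊆ K, where B₂ⁿ is the closed Euclidean unit ball, and let r : ∂K → ℝ be the rolling function. Then for every α with 0 ≤ α < 1 the function x ↦ r(x)^{−α} is integrable on ∂K with respect to the (n−1)-dimensional Hausdorff measure; in particular ∫_{∂K} r(x)^{−α} dH^{n−1}(x) < ∞ (and r(x) > 0 for H^{n−1}-almost every x ∈ ∂K). -/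
/-!
The proof rests on the bound `H({x ∈ ∂K : r(x) ≥ t}) ≥ (1 - t)^(n-1) H(∂K)` for `0 < t < 1`, where
`H` is the `(n-1)`-dimensional Hausdorff measure.

Let `K_t = {z : closedBall z t ⊆ K}` be the inner parallel body. The metric projection onto a convex
set does not increase distances, so it does not increase Hausdorff measure
(`hausdorffMeasure_le_of_normal`).

* Since the unit ball lies in `K`, convexity gives `(1 - t) K ⊆ K_t`. Projecting `∂K_t` onto
  `(1 - t) K` covers the whole boundary `(1 - t) ∂K`, because a ray from a boundary point in an outer
  normal direction leaves `K_t` somewhere (`exists_normal_frontier`).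
* A boundary point `z` of `K_t` is at distance exactly `t` from some `x ∈ ∂K`; then `r(x) ≥ t` and
  `z` is the projection of `x` onto `K_t` (`exists_touching_point`). So projecting
  `{x ∈ ∂K : r(x) ≥ t}` onto `K_t` covers `∂K_t`.

The same comparison with a large cube shows `H(∂K) < ∞`. By Bernoulli's inequality
`H({x ∈ ∂K : r(x) < t})` is at most a constant times `t`. This gives `r > 0` almost everywhere, and
the layer cake formula for `(1 / r)^α` reduces integrability to the convergence of
`∫ t^(α - 1)` on `(0, 1]` and of `∫ t^(α - 2)` on `(1, ∞)`.
-/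

open MeasureTheory

open Set Metric
open scoped Pointwise ENNReal

/-! ### Metric projections and Hausdorff measure -/

section Projection

variable {E : Type*} [NormedAddCommGroup E] [InnerProductSpace ℝ E]

/-- The hypothesis on `a` and `y` says that `a - y` is an outer normal of `C` at `y`, that is, `y` is
the metric projection of `a` onto `C`. So `B` is the image of a part of `A` under a map which does
not increase distances. -/
lemma hausdorffMeasure_le_of_normal [MeasurableSpace E] [BorelSpace E] {A B C : Set E}
    (hBC : B ⊆ C)
    (h : ∀ y ∈ B, ∃ a ∈ A, ∀ w ∈ C, inner ℝ (a - y) (w - y) ≤ 0) {d : ℝ} (hd : 0 ≤ d) :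
    μH[d] B ≤ μH[d] A := by
  choose! g hgA hg using h
  have key : ∀ y ∈ B, ∀ y' ∈ B, ‖y - y'‖ ≤ ‖g y - g y'‖ := by
    intro y hy y' hy'
    have h1 := hg y hy y' (hBC hy')
    have h2 := hg y' hy' y (hBC hy)
    have h3 : ‖y - y'‖ ^ 2 ≤ inner ℝ (g y - g y') (y - y') := by
      have e1 : inner ℝ (g y - g y') (y - y') =
          ‖y - y'‖ ^ 2 - inner ℝ (g y - y) (y' - y) - inner ℝ (g y' - y') (y - y') := by
        have e2 : g y - g y' = (y - y') + (g y - y) - (g y' - y') := by abel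
        rw [e2, inner_sub_left, inner_add_left, real_inner_self_eq_norm_sq,
          ← neg_sub y y', inner_neg_right]
        ring
      rw [e1]; linarith
    have h4 := real_inner_le_norm (g y - g y') (y - y')
    by_contra hlt
    push Not at hlt
    have h5 : 0 < ‖y - y'‖ := (norm_nonneg _).trans_lt hlt
    nlinarith
  have hinj : InjOn g B := by
    intro y hy y' hy' e
    have := key y hy y' hy'
    rw [e, sub_self, norm_zero] at this
    exact sub_eq_zero.1 (norm_le_zero_iff.1 this)
  have hinv : ∀ y ∈ B, Function.invFunOn g B (g y) = y := fun y hy =>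
    hinj.leftInvOn_invFunOn hy
  have hlip : LipschitzOnWith 1 (Function.invFunOn g B) (g '' B) := by
    refine LipschitzOnWith.of_dist_le_mul ?_
    rintro _ ⟨y, hy, rfl⟩ _ ⟨y', hy', rfl⟩
    rw [hinv y hy, hinv y' hy', dist_eq_norm, dist_eq_norm, NNReal.coe_one, one_mul]
    exact key y hy y' hy'
  have himg : Function.invFunOn g B '' (g '' B) = B := by
    rw [image_image]
    exact (image_congr hinv).trans (image_id' B)
  have := hlip.hausdorffMeasure_image_le hd
  rw [himg] at this
  refine this.trans ?_
  simp only [ENNReal.coe_one, ENNReal.one_rpow, one_mul]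
  exact measure_mono (image_subset_iff.2 hgA)

/-- An outer normal ray of `C` at a boundary point leaves any compact set containing `C` through
the boundary of that set. -/
lemma exists_normal_frontier [CompleteSpace E] {C D : Set E} (hC : Convex ℝ C) (hCc : IsClosed C)
    (hCi : (interior C).Nonempty) (hD : IsCompact D) (hCD : C ⊆ D) {y : E}
    (hy : y ∈ frontier C) :
    ∃ a ∈ frontier D, ∀ w ∈ C, inner ℝ (a - y) (w - y) ≤ 0 := by
  rw [hCc.frontier_eq] at hy
  obtain ⟨f, hf⟩ := geometric_hahn_banach_open_point hC.interior isOpen_interior hy.2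
  obtain ⟨u, rfl⟩ := (InnerProductSpace.toDual ℝ E).surjective f
  simp only [InnerProductSpace.toDual_apply_apply] at hf
  have hu : u ≠ 0 := by
    rintro rfl
    obtain ⟨p, hp⟩ := hCi
    simpa using hf p hp
  have hsupp : ∀ w ∈ C, inner ℝ u w ≤ inner ℝ u y := by
    have hcl : closure (interior C) ⊆ {w | inner ℝ u w ≤ inner ℝ u y} :=
      closure_minimal (fun w hw => (hf w hw).le) (isClosed_le (by fun_prop) (by fun_prop))
    intro w hw
    apply hcl
    rw [hC.closure_interior_eq_closure_of_nonempty_interior hCi]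
    exact subset_closure hw
  have hScl : IsClosed {s : ℝ | 0 ≤ s ∧ y + s • u ∈ D} :=
    isClosed_Ici.inter (hD.isClosed.preimage (by fun_prop : Continuous fun s : ℝ => y + s • u))
  obtain ⟨R, hR⟩ := hD.isBounded.exists_norm_le
  have hun : 0 < ‖u‖ := norm_pos_iff.2 hu
  have hS : IsCompact {s : ℝ | 0 ≤ s ∧ y + s • u ∈ D} := by
    refine (isCompact_Icc (a := (0 : ℝ)) (b := (R + ‖y‖) / ‖u‖)).of_isClosed_subset hScl ?_
    rintro s ⟨hs0, hs⟩
    refine ⟨hs0, ?_⟩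
    rw [le_div_iff₀ hun]
    have h1 : ‖s • u‖ ≤ ‖y + s • u‖ + ‖y‖ := by
      simpa using norm_sub_le (y + s • u) y
    rw [norm_smul, Real.norm_of_nonneg hs0] at h1
    linarith [hR _ hs]
  obtain ⟨s, ⟨hs0, hsD⟩, hsmax⟩ := hS.exists_isGreatest ⟨0, le_rfl, by simpa using hCD hy.1⟩
  refine ⟨y + s • u, ?_, fun w hw => ?_⟩
  · rw [hD.isClosed.frontier_eq]
    refine ⟨hsD, fun hint => ?_⟩
    have hopen : IsOpen {s : ℝ | y + s • u ∈ interior D} :=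
      isOpen_interior.preimage (by fun_prop : Continuous fun s : ℝ => y + s • u)
    obtain ⟨ε, hε, hb⟩ := Metric.isOpen_iff.1 hopen s hint
    have hmem : s + ε / 2 ∈ ball s ε := by
      rw [mem_ball, Real.dist_eq, add_sub_cancel_left, abs_of_pos (by positivity)]
      linarith
    have := hsmax ⟨by positivity, interior_subset (hb hmem)⟩
    linarith
  · rw [add_sub_cancel_left, inner_smul_left, inner_sub_right]
    exact mul_nonpos_of_nonneg_of_nonpos hs0 (by linarith [hsupp w hw])

end Projection

/-! ### The inner parallel body -/

section InnerParallel

variable {n : ℕ}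

/-- The inner parallel body `K_t`: the centres of the closed balls of radius `t` contained in `K`. -/
def innerParallel (K : Set (EuclideanSpace ℝ (Fin n))) (t : ℝ) : Set (EuclideanSpace ℝ (Fin n)) :=
  {z | closedBall z t ⊆ K}

lemma mem_innerParallel_iff {K : Set (EuclideanSpace ℝ (Fin n))} {t : ℝ}
    {z : EuclideanSpace ℝ (Fin n)} :
    z ∈ innerParallel K t ↔ ∀ v, ‖v‖ ≤ t → z + v ∈ K := by
  constructor
  · intro h v hv
    exact h (by simpa [mem_closedBall, dist_eq_norm] using hv)
  · intro h p hp
    have := h (p - z) (by simpa [mem_closedBall, dist_eq_norm] using hp)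
    simpa using this

lemma innerParallel_subset (K : Set (EuclideanSpace ℝ (Fin n))) {t : ℝ} (ht : 0 ≤ t) :
    innerParallel K t ⊆ K :=
  fun _ hz => hz (mem_closedBall_self ht)

lemma isClosed_innerParallel {K : Set (EuclideanSpace ℝ (Fin n))} (hK : IsClosed K) (t : ℝ) :
    IsClosed (innerParallel K t) := by
  have : innerParallel K t = ⋂ v, ⋂ (_ : ‖v‖ ≤ t), (fun z => z + v) ⁻¹' K := by
    ext z
    simp [mem_innerParallel_iff]
  rw [this]
  exact isClosed_iInter fun v => isClosed_iInter fun _ => hK.preimage (by fun_prop)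

lemma convex_innerParallel {K : Set (EuclideanSpace ℝ (Fin n))} (hK : Convex ℝ K) (t : ℝ) :
    Convex ℝ (innerParallel K t) := by
  intro z hz z' hz' a b ha hb hab
  rw [mem_innerParallel_iff] at hz hz' ⊢
  intro v hv
  have e : a • z + b • z' + v = a • (z + v) + b • (z' + v) := by
    have : v = a • v + b • v := by rw [← add_smul, hab, one_smul]
    conv_lhs => rw [this]
    module
  rw [e]
  exact hK (hz v hv) (hz' v hv) ha hb hab

lemma smul_subset_innerParallel {K : Set (EuclideanSpace ℝ (Fin n))} (hK : Convex ℝ K)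
    (hball : closedBall 0 1 ⊆ K) {t : ℝ} (ht0 : 0 < t) (ht1 : t < 1) :
    (1 - t) • K ⊆ innerParallel K t := by
  rintro _ ⟨k, hk, rfl⟩
  rw [mem_innerParallel_iff]
  intro v hv
  have hv' : t⁻¹ • v ∈ K := by
    apply hball
    rw [mem_closedBall_zero_iff, norm_smul, norm_inv, Real.norm_of_nonneg ht0.le]
    rw [inv_mul_le_iff₀ ht0, mul_one]
    exact hv
  have := hK hk hv' (by linarith : 0 ≤ 1 - t) ht0.le (by ring)
  rwa [smul_smul, mul_inv_cancel₀ ht0.ne', one_smul] at this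

/-! ### The rolling function -/

lemma rollingFunction_nonneg (K : Set (EuclideanSpace ℝ (Fin n)))
    (x : EuclideanSpace ℝ (Fin n)) : 0 ≤ rollingFunction K x := by
  apply Real.sSup_nonneg
  rintro _ ⟨z, _, rfl, _⟩
  exact norm_nonneg _

lemma bddAbove_rolling {K : Set (EuclideanSpace ℝ (Fin n))} (hK : IsCompact K)
    (x : EuclideanSpace ℝ (Fin n)) :
    BddAbove {d : ℝ | ∃ z ∈ K, d = ‖x - z‖ ∧ closedBall z ‖x - z‖ ⊆ K} := by
  obtain ⟨R, hR⟩ := hK.isBounded.exists_norm_le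
  refine ⟨‖x‖ + R, ?_⟩
  rintro _ ⟨z, hz, rfl, _⟩
  exact (norm_sub_le _ _).trans (by linarith [hR z hz])

/-- A boundary point `z` of `K_t` is the metric projection onto `K_t` of a boundary point `x` of `K`
at which a ball of radius `t`, namely the one centred at `z`, touches `∂K` from inside. -/
lemma exists_touching_point {K : Set (EuclideanSpace ℝ (Fin n))} (hK : IsCompact K)
    (hKc : Convex ℝ K) {t : ℝ} (ht : 0 < t) {z : EuclideanSpace ℝ (Fin n)}
    (hz : z ∈ frontier (innerParallel K t)) :
    ∃ x ∈ frontier K ∩ {x | t ≤ rollingFunction K x},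
      ∀ w ∈ innerParallel K t, inner ℝ (x - z) (w - z) ≤ 0 := by
  rw [(isClosed_innerParallel hK.isClosed t).frontier_eq] at hz
  obtain ⟨hz, hzi⟩ := hz
  have hex : ∃ x ∈ closedBall z t, x ∉ interior K := by
    by_contra! hcon
    obtain ⟨δ, hδ, hsub⟩ :=
      (isCompact_closedBall z t).exists_cthickening_subset_open isOpen_interior hcon
    apply hzi
    rw [mem_interior_iff_mem_nhds, Metric.mem_nhds_iff]
    refine ⟨δ, hδ, fun z' hz' p hp => interior_subset (hsub ?_)⟩
    refine mem_cthickening_of_dist_le p (p + (z - z')) δ _ ?_ ?_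
    · rw [mem_closedBall, dist_eq_norm] at hp ⊢
      have e : p + (z - z') - z = p - z' := by abel
      rwa [e]
    · rw [mem_ball, dist_eq_norm] at hz'
      rw [dist_eq_norm]
      have e : p - (p + (z - z')) = z' - z := by abel
      rw [e]
      exact hz'.le
  obtain ⟨x, hxz, hxi⟩ := hex
  have hxK : x ∈ K := hz hxz
  -- The open ball around any point of `K_t` lies in the interior of `K`, hence misses `x`.
  have hfar : ∀ w ∈ innerParallel K t, t ≤ ‖x - w‖ := by
    intro w hw
    by_contra! hlt
    refine hxi (interior_maximal (ball_subset_closedBall.trans hw) isOpen_ball ?_)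
    rwa [mem_ball, dist_eq_norm]
  have hxt : ‖x - z‖ = t := le_antisymm (by rwa [mem_closedBall, dist_eq_norm] at hxz) (hfar z hz)
  refine ⟨x, ⟨?_, ?_⟩, ?_⟩
  · rw [hK.isClosed.frontier_eq]
    exact ⟨hxK, hxi⟩
  · exact le_csSup (bddAbove_rolling hK x)
      ⟨z, innerParallel_subset K ht.le hz, hxt.symm, by rw [hxt]; exact hz⟩
  · rw [← norm_eq_iInf_iff_real_inner_le_zero (convex_innerParallel hKc t) hz]
    have : Nonempty (innerParallel K t) := ⟨⟨z, hz⟩⟩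
    refine le_antisymm (le_ciInf fun w => ?_) ?_
    · rw [hxt]; exact hfar w w.2
    · exact ciInf_le ⟨0, by rintro _ ⟨w, rfl⟩; exact norm_nonneg _⟩ (⟨z, hz⟩ : innerParallel K t)

lemma hausdorffMeasure_rolling_ge {K : Set (EuclideanSpace ℝ (Fin n))} (hK : IsCompact K)
    (hKc : Convex ℝ K) (hball : closedBall 0 1 ⊆ K) {d : ℝ} (hd : 0 ≤ d) {t : ℝ}
    (ht0 : 0 < t) (ht1 : t < 1) :
    ENNReal.ofReal ((1 - t) ^ d) * μH[d] (frontier K) ≤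
      μH[d] (frontier K ∩ {x | t ≤ rollingFunction K x}) := by
  have h1t : 0 < 1 - t := by linarith
  have hKi : (interior K).Nonempty :=
    ⟨0, interior_mono hball (by rw [interior_closedBall _ one_ne_zero]; simp)⟩
  have hsmul : frontier ((1 - t) • K) = (1 - t) • frontier K := by
    rw [frontier, frontier, closure_smul₀ (1 - t), interior_smul₀ h1t.ne',
      smul_set_sdiff₀ h1t.ne']
  have hPc : IsCompact (innerParallel K t) :=
    hK.of_isClosed_subset (isClosed_innerParallel hK.isClosed t) (innerParallel_subset K ht0.le)
  have hCcl : IsClosed ((1 - t) • K) := (hK.smul _).isClosed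
  calc ENNReal.ofReal ((1 - t) ^ d) * μH[d] (frontier K)
      = μH[d] (frontier ((1 - t) • K)) := by
        rw [hsmul, Measure.hausdorffMeasure_smul₀ hd h1t.ne', ENNReal.smul_def, smul_eq_mul]
        congr 1
        rw [← ENNReal.ofReal_rpow_of_pos h1t, ENNReal.coe_rpow_of_nonneg _ hd]
        congr 1
        rw [← enorm_eq_nnnorm, Real.enorm_of_nonneg h1t.le]
    _ ≤ μH[d] (frontier (innerParallel K t)) :=
        hausdorffMeasure_le_of_normal hCcl.frontier_subset
          (fun y hy => exists_normal_frontier (hKc.smul _) hCcl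
            (by rw [interior_smul₀ h1t.ne']; exact hKi.smul_set) hPc
            (smul_subset_innerParallel hKc hball ht0 ht1) hy) hd
    _ ≤ _ := hausdorffMeasure_le_of_normal hPc.isClosed.frontier_subset
          (fun y hy => exists_touching_point hK hKc ht0 hy) hd

/-- Upper semicontinuity of the rolling function on `∂K`. -/
lemma isClosed_rolling_ge {K : Set (EuclideanSpace ℝ (Fin n))} (hK : IsCompact K) (t : ℝ) :
    IsClosed (frontier K ∩ {x | t ≤ rollingFunction K x}) := by
  set T : Set (EuclideanSpace ℝ (Fin n) × EuclideanSpace ℝ (Fin n)) :=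
    {p | p.2 ∈ K ∧ ∀ v : EuclideanSpace ℝ (Fin n), ‖v‖ ≤ 1 → p.2 + ‖p.1 - p.2‖ • v ∈ K} with hT
  have hball : ∀ x z : EuclideanSpace ℝ (Fin n), closedBall z ‖x - z‖ ⊆ K ↔
      ∀ v : EuclideanSpace ℝ (Fin n), ‖v‖ ≤ 1 → z + ‖x - z‖ • v ∈ K := by
    intro x z
    constructor
    · intro h v hv
      apply h
      rw [mem_closedBall, dist_eq_norm, add_sub_cancel_left, norm_smul, norm_norm]
      exact mul_le_of_le_one_right (norm_nonneg _) hv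
    · intro h p hp
      rw [mem_closedBall, dist_eq_norm] at hp
      rcases (norm_nonneg (x - z)).eq_or_lt with h0 | h0
      · have hpz : p = z := by
          rw [← h0] at hp
          exact sub_eq_zero.1 (norm_le_zero_iff.1 hp)
        simpa [hpz] using h 0 (by simp)
      · have := h (‖x - z‖⁻¹ • (p - z)) (by
          rw [norm_smul, norm_inv, norm_norm, inv_mul_le_iff₀ h0, mul_one]; exact hp)
        rwa [smul_smul, mul_inv_cancel₀ h0.ne', one_smul, add_sub_cancel] at this
  have hTcl : IsClosed T := by
    have : T = (Prod.snd ⁻¹' K) ∩ ⋂ v : EuclideanSpace ℝ (Fin n), ⋂ (_ : ‖v‖ ≤ 1),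
        (fun p : EuclideanSpace ℝ (Fin n) × EuclideanSpace ℝ (Fin n) =>
          p.2 + ‖p.1 - p.2‖ • v) ⁻¹' K := by
      ext p
      simp [hT]
    rw [this]
    exact (hK.isClosed.preimage continuous_snd).inter
      (isClosed_iInter fun v => isClosed_iInter fun _ => hK.isClosed.preimage (by fun_prop))
  have hcomp : IsCompact ((frontier K ×ˢ K) ∩ (T ∩ {p | t ≤ ‖p.1 - p.2‖})) :=
    ((hK.of_isClosed_subset isClosed_frontier hK.isClosed.frontier_subset).prod hK).inter_right
      (hTcl.inter (isClosed_le (by fun_prop) (by fun_prop)))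
  convert (hcomp.image continuous_fst).isClosed using 1
  ext x
  constructor
  · rintro ⟨hx, hxt⟩
    -- The supremum defining the rolling function is attained.
    have hxK := hK.isClosed.frontier_subset hx
    have hZ : IsCompact {z | (x, z) ∈ T} :=
      hK.of_isClosed_subset (hTcl.preimage (by fun_prop)) (fun z hz => hz.1)
    obtain ⟨z, hz, hmax⟩ := hZ.exists_isMaxOn (f := fun z => ‖x - z‖)
      ⟨x, hxK, by simpa using fun _ _ => hxK⟩ (by fun_prop)
    refine ⟨(x, z), ⟨⟨hx, hz.1⟩, hz, ?_⟩, rfl⟩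
    refine le_trans (mem_ofPred_eq ▸ hxt) ?_
    refine csSup_le ⟨_, z, hz.1, rfl, (hball x z).2 hz.2⟩ ?_
    rintro _ ⟨w, hw, rfl, hwb⟩
    exact hmax ⟨hw, (hball x w).1 hwb⟩
  · rintro ⟨⟨x, z⟩, ⟨⟨hx, hz⟩, hzT, hzt⟩, rfl⟩
    exact ⟨hx, le_trans hzt (le_csSup (bddAbove_rolling hK x)
      ⟨z, hz, rfl, (hball x z).2 hzT.2⟩)⟩

end InnerParallel

/-! ### Finiteness of the surface measure -/

/-- Every face of the cube `[-R, R]^(m+1)` is a Lipschitz image of the cube `[-R, R]^m`. -/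
lemma hausdorffMeasure_frontier_cube_lt_top (m : ℕ) (R : ℝ) :
    μH[(m : ℝ)] (frontier {x : EuclideanSpace ℝ (Fin (m + 1)) | ∀ i, |x i| ≤ R}) < ∞ := by
  set D := {x : EuclideanSpace ℝ (Fin (m + 1)) | ∀ i, |x i| ≤ R} with hD
  let F : Fin (m + 1) → ℝ → (Fin m → ℝ) → EuclideanSpace ℝ (Fin (m + 1)) :=
    fun i c y => WithLp.toLp 2 (i.insertNth (α := fun _ => ℝ) c y)
  have hDcl : IsClosed D := by
    have : D = ⋂ i, {x : EuclideanSpace ℝ (Fin (m + 1)) | |x i| ≤ R} := by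
      ext x; simp [hD]
    rw [this]
    exact isClosed_iInter fun i => isClosed_le (by fun_prop) (by fun_prop)
  have hsub : frontier D ⊆ ⋃ i, (F i R '' Icc (fun _ => -R) (fun _ => R) ∪
      F i (-R) '' Icc (fun _ => -R) (fun _ => R)) := by
    rw [hDcl.frontier_eq]
    rintro x ⟨hx, hxi⟩
    have hex : ∃ i, |x i| = R := by
      by_contra! hne
      apply hxi
      have hopen : IsOpen {x : EuclideanSpace ℝ (Fin (m + 1)) | ∀ i, |x i| < R} := by
        have : {x : EuclideanSpace ℝ (Fin (m + 1)) | ∀ i, |x i| < R} =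
            ⋂ i, {x : EuclideanSpace ℝ (Fin (m + 1)) | |x i| < R} := by
          ext x; simp
        rw [this]
        exact isOpen_iInter_of_finite fun i => isOpen_lt (by fun_prop) (by fun_prop)
      exact interior_maximal (fun p hp i => (hp i).le) hopen
        (fun i => lt_of_le_of_ne (hx i) (hne i))
    obtain ⟨i, hi⟩ := hex
    have hF : ∀ c, x i = c → x ∈ F i c '' Icc (fun _ => -R) (fun _ => R) := by
      rintro c rfl
      refine ⟨fun j => x (i.succAbove j), ⟨fun j => (abs_le.1 (hx _)).1,
        fun j => (abs_le.1 (hx _)).2⟩, ?_⟩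
      ext j
      refine Fin.succAboveCases i ?_ (fun k => ?_) j
      · simp [F]
      · simp [F]
    refine mem_iUnion.2 ⟨i, ?_⟩
    rcases eq_or_eq_neg_of_abs_eq hi with h | h
    · exact Or.inl (hF _ h)
    · exact Or.inr (hF _ h)
  have hface : ∀ i c, μH[(m : ℝ)] (F i c '' Icc (fun _ => -R) (fun _ => R)) < ∞ := by
    intro i c
    have hins : LipschitzWith 1 (fun y : Fin m → ℝ => i.insertNth (α := fun _ => ℝ) c y) := by
      refine LipschitzWith.of_dist_le_mul fun y y' => ?_
      rw [NNReal.coe_one, one_mul, dist_pi_le_iff dist_nonneg]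
      intro j
      refine Fin.succAboveCases i ?_ (fun k => ?_) j
      · simp
      · simpa using dist_le_pi_dist y y' k
    have hlip := (PiLp.lipschitzWith_toLp 2 (fun _ : Fin (m + 1) => ℝ)).comp hins
    refine (hlip.hausdorffMeasure_image_le (Nat.cast_nonneg m) _).trans_lt ?_
    refine ENNReal.mul_lt_top
      (ENNReal.rpow_lt_top_of_nonneg (Nat.cast_nonneg m) ENNReal.coe_ne_top) ?_
    have hvol : (μH[(m : ℝ)] : Measure (Fin m → ℝ)) = volume := by
      simpa using hausdorffMeasure_pi_real (ι := Fin m)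
    rw [hvol]
    exact isCompact_Icc.measure_lt_top
  refine (measure_mono hsub).trans_lt ((measure_iUnion_le _).trans_lt ?_)
  rw [tsum_fintype]
  exact ENNReal.sum_lt_top.2 fun i _ =>
    (measure_union_le _ _).trans_lt (ENNReal.add_lt_top.2 ⟨hface i R, hface i (-R)⟩)

lemma hausdorffMeasure_frontier_lt_top {m : ℕ} {K : Set (EuclideanSpace ℝ (Fin (m + 1)))}
    (hK : IsCompact K) (hKc : Convex ℝ K) (hKi : (interior K).Nonempty) :
    μH[(m : ℝ)] (frontier K) < ∞ := by
  obtain ⟨R, hR⟩ := hK.isBounded.exists_norm_le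
  have hcube : IsCompact {x : EuclideanSpace ℝ (Fin (m + 1)) | ∀ i, |x i| ≤ R} := by
    have h := (isCompact_Icc (a := fun _ : Fin (m + 1) => -R) (b := fun _ => R)).image
      (PiLp.continuous_toLp 2 (fun _ : Fin (m + 1) => ℝ))
    convert h using 1
    ext x
    constructor
    · intro hx
      exact ⟨x.ofLp, ⟨fun i => (abs_le.1 (hx i)).1, fun i => (abs_le.1 (hx i)).2⟩, rfl⟩
    · rintro ⟨y, hy, rfl⟩ i
      exact abs_le.2 ⟨hy.1 i, hy.2 i⟩
  refine lt_of_le_of_lt ?_ (hausdorffMeasure_frontier_cube_lt_top m R)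
  refine hausdorffMeasure_le_of_normal hK.isClosed.frontier_subset (fun y hy =>
    exists_normal_frontier hKc hK.isClosed hKi hcube (fun x hx i => ?_) hy) (Nat.cast_nonneg m)
  have := (PiLp.norm_apply_le x i).trans (hR x hx)
  rwa [Real.norm_eq_abs] at this

/-! ### From a tail bound to integrability -/

/-- A function which is small on sets of linearly small measure has integrable negative powers of
exponent larger than `-1`. At zeros of `f` the power takes the junk value `0` when `α > 0`. -/
lemma integrable_rpow_neg_of_measure_lt_le {X : Type*} [MeasurableSpace X] (μ : Measure X)
    [IsFiniteMeasure μ] {f : X → ℝ} (hf0 : ∀ x, 0 ≤ f x) (hf : AEMeasurable f μ) {c : ℝ}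
    (h : ∀ t, 0 < t → μ {x | f x < t} ≤ ENNReal.ofReal (c * t)) {α : ℝ} (hα0 : 0 ≤ α)
    (hα1 : α < 1) : Integrable (fun x => f x ^ (-α)) μ := by
  rcases hα0.eq_or_lt with rfl | hα
  · simp
  have e : (fun x => f x ^ (-α)) = fun x => (f x)⁻¹ ^ α := by
    funext x
    rw [Real.rpow_neg (hf0 x), Real.inv_rpow (hf0 x)]
  rw [e]
  have hm : AEMeasurable (fun x => (f x)⁻¹) μ := hf.inv
  refine ⟨(hm.pow_const α).aestronglyMeasurable, ?_⟩
  rw [hasFiniteIntegral_iff_ofReal (Filter.Eventually.of_forall fun x =>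
    Real.rpow_nonneg (inv_nonneg.2 (hf0 x)) α),
    lintegral_rpow_eq_lintegral_meas_lt_mul μ
      (Filter.Eventually.of_forall fun x => inv_nonneg.2 (hf0 x)) hm hα]
  refine ENNReal.mul_lt_top ENNReal.ofReal_lt_top ?_
  rw [← Ioc_union_Ioi_eq_Ioi (zero_le_one (α := ℝ))]
  refine (lintegral_union_le _ _ _).trans_lt (ENNReal.add_lt_top.2 ⟨?_, ?_⟩)
  · have hi : IntegrableOn (fun t : ℝ => t ^ (α - 1)) (Ioc 0 1) :=
      (intervalIntegrable_iff_integrableOn_Ioc_of_le zero_le_one).1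
        (intervalIntegral.intervalIntegrable_rpow' (by linarith))
    calc ∫⁻ t in Ioc (0 : ℝ) 1, μ {a | t < (f a)⁻¹} * ENNReal.ofReal (t ^ (α - 1))
        ≤ ∫⁻ t in Ioc (0 : ℝ) 1, μ univ * ENNReal.ofReal (t ^ (α - 1)) :=
          lintegral_mono fun t => by gcongr; exact subset_univ _
      _ = μ univ * ∫⁻ t in Ioc (0 : ℝ) 1, ENNReal.ofReal (t ^ (α - 1)) :=
          lintegral_const_mul' _ _ (measure_ne_top _ _)
      _ < ∞ := ENNReal.mul_lt_top (measure_lt_top _ _) hi.lintegral_lt_top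
  · have hi : IntegrableOn (fun t : ℝ => t ^ (α - 2)) (Ioi 1) :=
      integrableOn_Ioi_rpow_of_lt (by linarith) one_pos
    calc ∫⁻ t in Ioi (1 : ℝ), μ {a | t < (f a)⁻¹} * ENNReal.ofReal (t ^ (α - 1))
        ≤ ∫⁻ t in Ioi (1 : ℝ), ENNReal.ofReal c * ENNReal.ofReal (t ^ (α - 2)) := by
          refine setLIntegral_mono' measurableSet_Ioi fun t ht => ?_
          have ht0 : 0 < t := one_pos.trans ht
          have hsub : {a | t < (f a)⁻¹} ⊆ {a | f a < t⁻¹} := by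
            intro a (ha : t < (f a)⁻¹)
            have hfa : 0 < f a := inv_pos.1 (ht0.trans ha)
            exact (lt_inv_comm₀ ht0 hfa).1 ha
          calc μ {a | t < (f a)⁻¹} * ENNReal.ofReal (t ^ (α - 1))
              ≤ ENNReal.ofReal (c * t⁻¹) * ENNReal.ofReal (t ^ (α - 1)) := by
                gcongr
                exact (measure_mono hsub).trans (h _ (inv_pos.2 ht0))
            _ = ENNReal.ofReal c * ENNReal.ofReal (t ^ (α - 2)) := by
                rw [ENNReal.ofReal_mul' (inv_nonneg.2 ht0.le), mul_assoc,
                  ← ENNReal.ofReal_mul (inv_nonneg.2 ht0.le)]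
                congr 2
                rw [← Real.rpow_neg_one, ← Real.rpow_add ht0]
                congr 1
                ring
      _ = ENNReal.ofReal c * ∫⁻ t in Ioi (1 : ℝ), ENNReal.ofReal (t ^ (α - 2)) :=
          lintegral_const_mul' _ _ ENNReal.ofReal_ne_top
      _ < ∞ := ENNReal.mul_lt_top ENNReal.ofReal_lt_top hi.lintegral_lt_top

/-- For `t < 1` this follows from `hausdorffMeasure_rolling_ge` and the Bernoulli inequality
`1 - (1 - t)^m ≤ m t`. The constant `m + 1` in place of `m` covers `t ≥ 1`. -/
lemma measure_rolling_lt_le {m : ℕ} {K : Set (EuclideanSpace ℝ (Fin (m + 1)))}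
    (hK : IsCompact K) (hKc : Convex ℝ K) (hball : closedBall 0 1 ⊆ K)
    (hfin : μH[(m : ℝ)] (frontier K) < ∞) {t : ℝ} (ht : 0 < t) :
    (μH[(m : ℝ)] : Measure (EuclideanSpace ℝ (Fin (m + 1)))).restrict (frontier K)
      {x | rollingFunction K x < t} ≤
    ENNReal.ofReal ((m + 1) * (μH[(m : ℝ)] (frontier K)).toReal * t) := by
  set μ := (μH[(m : ℝ)] : Measure (EuclideanSpace ℝ (Fin (m + 1)))) with hμ
  set M := (μ (frontier K)).toReal with hM
  have hM0 : 0 ≤ M := ENNReal.toReal_nonneg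
  have hMe : μ (frontier K) = ENNReal.ofReal M := (ENNReal.ofReal_toReal hfin.ne).symm
  rw [Measure.restrict_apply' isClosed_frontier.measurableSet]
  rcases lt_or_ge t 1 with ht1 | ht1
  · have hge := hausdorffMeasure_rolling_ge hK hKc hball (Nat.cast_nonneg m) ht ht1
    rw [← hμ, hMe, ← ENNReal.ofReal_mul (by positivity [sub_pos.2 ht1])] at hge
    have hset : {x | rollingFunction K x < t} ∩ frontier K =
        frontier K \ (frontier K ∩ {x | t ≤ rollingFunction K x}) := by
      ext x
      simp only [mem_inter_iff, mem_ofPred_eq, mem_sdiff, not_and, not_le]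
      tauto
    have hcl := isClosed_rolling_ge hK t
    rw [hset, measure_sdiff inter_subset_left hcl.measurableSet.nullMeasurableSet
      (ne_top_of_le_ne_top hfin.ne (measure_mono inter_subset_left))]
    refine (tsub_le_tsub_left hge _).trans ?_
    rw [hMe, ← ENNReal.ofReal_sub _ (by have := sub_pos.2 ht1; positivity)]
    apply ENNReal.ofReal_le_ofReal
    have hb := one_add_mul_le_pow (a := -t) (by linarith) m
    rw [Real.rpow_natCast, sub_eq_add_neg 1 t]
    nlinarith [mul_le_mul_of_nonneg_right hb hM0, mul_nonneg hM0 ht.le]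
  · refine (measure_mono inter_subset_right).trans ?_
    rw [hMe]
    apply ENNReal.ofReal_le_ofReal
    have h1 : (1 : ℝ) ≤ (m + 1) * t := by
      nlinarith [Nat.cast_nonneg (α := ℝ) m]
    nlinarith

lemma aemeasurable_rollingFunction {n : ℕ} {K : Set (EuclideanSpace ℝ (Fin n))}
    (hK : IsCompact K) (μ : Measure (EuclideanSpace ℝ (Fin n))) :
    AEMeasurable (rollingFunction K) (μ.restrict (frontier K)) := by
  rw [← aemeasurable_indicator_iff isClosed_frontier.measurableSet]
  refine (measurable_of_Ici fun t => ?_).aemeasurable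
  rcases le_or_gt t 0 with ht | ht
  · convert MeasurableSet.univ using 1
    refine eq_univ_of_forall fun x => ?_
    exact ht.trans (indicator_nonneg (fun y _ => rollingFunction_nonneg K y) x)
  · convert (isClosed_rolling_ge hK t).measurableSet using 1
    ext x
    by_cases hx : x ∈ frontier K
    · simp [hx]
    · simp [hx, ht]

/-- For a convex body `K` containing the unit ball and `0 ≤ α < 1`, the function
`r^{-α}` is integrable on `∂K` with respect to the `(n−1)`-dimensional Hausdorff
measure, and `r > 0` almost everywhere on `∂K`. -/
theorem rollingFunction_rpow_integrable {n : ℕ}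
    (K : Set (EuclideanSpace ℝ (Fin n))) (hKcomp : IsCompact K) (hKconv : Convex ℝ K)
    (hKball : Metric.closedBall (0 : EuclideanSpace ℝ (Fin n)) 1 ⊆ K)
    (α : ℝ) (hα0 : 0 ≤ α) (hα1 : α < 1) :
    IntegrableOn (fun x => rollingFunction K x ^ (-α)) (frontier K)
      (μH[(n : ℝ) - 1]) ∧
    ∀ᵐ x ∂((μH[(n : ℝ) - 1] : Measure (EuclideanSpace ℝ (Fin n))).restrict (frontier K)),
      0 < rollingFunction K x := by
  rcases n with _ | m
  · -- In dimension zero the space is a single point and the boundary of `K` is empty.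
    simp
  have hd : ((m + 1 : ℕ) : ℝ) - 1 = m := by push_cast; ring
  rw [hd]
  have hKi : (interior K).Nonempty :=
    ⟨0, interior_mono hKball (by rw [interior_closedBall _ one_ne_zero]; simp)⟩
  have hfin := hausdorffMeasure_frontier_lt_top hKcomp hKconv hKi
  have htail := fun (t : ℝ) (ht : 0 < t) =>
    measure_rolling_lt_le hKcomp hKconv hKball hfin ht
  set μ := (μH[(m : ℝ)] : Measure (EuclideanSpace ℝ (Fin (m + 1)))).restrict (frontier K) with hμ
  have : IsFiniteMeasure μ := ⟨by rw [hμ, Measure.restrict_apply_univ]; exact hfin⟩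
  refine ⟨integrable_rpow_neg_of_measure_lt_le μ (rollingFunction_nonneg K)
    (aemeasurable_rollingFunction hKcomp _) htail hα0 hα1, ?_⟩
  rw [ae_iff]
  set c := (m + 1) * (μH[(m : ℝ)] (frontier K)).toReal with hc
  have hlim : Filter.Tendsto (fun t : ℝ => ENNReal.ofReal (c * t)) (nhdsWithin 0 (Ioi 0))
      (nhds 0) := by
    have h0 : Continuous fun t : ℝ => ENNReal.ofReal (c * t) :=
      ENNReal.continuous_ofReal.comp (continuous_const_mul c)
    simpa using (h0.tendsto 0).mono_left nhdsWithin_le_nhds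
  refine le_antisymm (ge_of_tendsto hlim ?_) zero_le
  filter_upwards [self_mem_nhdsWithin] with t ht
  refine (measure_mono fun x hx => ?_).trans (htail t ht)
  exact (not_lt.1 hx).trans_lt ht
end

section
/- Let K be a convex body in ℝⁿ and suppose that for some r > 0 a Euclidean ball of radius r rolls freely in K. Then K has a unique outer unit normal at every boundary point: for every x ∈ ∂K there exists exactly one unit vector u with ⟨y − x, u⟩ ≤ 0 for all y ∈ K. -/
/-!
Existence of a normal is the supporting hyperplane theorem: a boundary point is separated from the
open convex set `interior K`, and the weak inequality passes to `K ⊆ closure (interior K)`.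

For uniqueness, let `closedBall z r ⊆ K` contain `x`, and let `u` be an outer unit normal at `x`.
Testing `u` against `z + r • u ∈ K` gives `r ≤ ⟪x - z, u⟫`, while `‖x - z‖ ≤ r`. This is the equality
case of Cauchy–Schwarz, so `x - z = r • u`, and `u` is determined by `x` and `z`.
-/

open scoped InnerProductSpace

theorem exists_outer_unit_normal {E : Type*} [NormedAddCommGroup E] [InnerProductSpace ℝ E]
    [CompleteSpace E] {K : Set E} (hK : Convex ℝ K) (hint : (interior K).Nonempty)
    {x : E} (hx : x ∈ frontier K) :
    ∃ u : E, ‖u‖ = 1 ∧ ∀ y ∈ K, ⟪y - x, u⟫_ℝ ≤ 0 := by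
  obtain ⟨f, hf⟩ := geometric_hahn_banach_open_point hK.interior isOpen_interior hx.2
  set v := (InnerProductSpace.toDual ℝ E).symm f with hv
  have hfv : ∀ y, f y = ⟪y, v⟫_ℝ := fun y => by
    rw [real_inner_comm, hv, InnerProductSpace.toDual_symm_apply]
  have hv0 : v ≠ 0 := by
    intro h
    obtain ⟨a, ha⟩ := hint
    have := hf a ha
    simp [hfv, h] at this
  have hle : ∀ y ∈ K, f y ≤ f x := by
    intro y hy
    have hy' : y ∈ closure (interior K) := by
      rw [hK.closure_interior_eq_closure_of_nonempty_interior hint]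
      exact subset_closure hy
    exact closure_minimal (fun a ha => (hf a ha).le)
      (isClosed_le f.continuous continuous_const) hy'
  refine ⟨‖v‖⁻¹ • v, norm_smul_inv_norm (𝕜 := ℝ) hv0, fun y hy => ?_⟩
  rw [inner_smul_right, inner_sub_left, ← hfv, ← hfv]
  exact mul_nonpos_of_nonneg_of_nonpos (by positivity) (sub_nonpos.2 (hle y hy))

theorem sub_center_eq_smul_outer_normal {E : Type*} [NormedAddCommGroup E] [InnerProductSpace ℝ E]
    {K : Set E} {r : ℝ} (hr : 0 < r) {x z u : E} (hx : x ∈ Metric.closedBall z r)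
    (hz : Metric.closedBall z r ⊆ K) (hu : ‖u‖ = 1) (hn : ∀ y ∈ K, ⟪y - x, u⟫_ℝ ≤ 0) :
    x - z = r • u := by
  have hxz : ‖x - z‖ ≤ r := by simpa [dist_eq_norm] using hx
  have hmem : z + r • u ∈ K := hz (by simp [norm_smul, hu, abs_of_pos hr])
  have hin : r ≤ ⟪x - z, u⟫_ℝ := by
    have h := hn _ hmem
    have e : z + r • u - x = r • u - (x - z) := by abel
    rw [e, inner_sub_left, real_inner_smul_left, real_inner_self_eq_norm_sq, hu] at h
    linarith
  have hsq : ‖x - z - r • u‖ ^ 2 ≤ 0 := by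
    rw [norm_sub_sq_real, inner_smul_right, norm_smul, hu, Real.norm_of_nonneg hr.le]
    nlinarith [norm_nonneg (x - z)]
  have h0 : ‖x - z - r • u‖ = 0 := by
    simpa using le_antisymm hsq (sq_nonneg _)
  exact sub_eq_zero.1 (norm_eq_zero.1 h0)

/-- If a Euclidean ball of radius `r > 0` rolls freely in a convex body `K`, then `K`
has a unique outer unit normal at every boundary point. -/
theorem unique_normal_of_ball_rolls_freely {n : ℕ}
    (K : Set (EuclideanSpace ℝ (Fin n))) (hKcomp : IsCompact K) (hKconv : Convex ℝ K)
    (hKint : (interior K).Nonempty)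
    (r : ℝ) (hr : 0 < r)
    (hroll : ∀ x ∈ frontier K, ∃ z : EuclideanSpace ℝ (Fin n),
      x ∈ Metric.closedBall z r ∧ Metric.closedBall z r ⊆ K) :
    ∀ x ∈ frontier K, ∃! u : EuclideanSpace ℝ (Fin n),
      ‖u‖ = 1 ∧ ∀ y ∈ K, ⟪y - x, u⟫_ℝ ≤ 0 := by
  intro x hx
  obtain ⟨z, hxz, hzK⟩ := hroll x hx
  refine existsUnique_of_exists_of_unique (exists_outer_unit_normal hKconv hKint hx) ?_
  rintro u w ⟨hu, hun⟩ ⟨hw, hwn⟩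
  refine smul_right_injective _ hr.ne' ?_
  exact (sub_center_eq_smul_outer_normal hr hxz hzK hu hun).symm.trans
    (sub_center_eq_smul_outer_normal hr hxz hzK hw hwn)
end

section
/- Let K be a convex body in ℝⁿ and suppose that for some r > 0 a Euclidean ball of radius r rolls freely in K. Then K is the r-outer parallel body of a convex body: there exists a compact convex set C with K = C + r·B₂ⁿ, where B₂ⁿ is the closed Euclidean unit ball and + denotes Minkowski addition. -/
open scoped Pointwise

/-!
The set `C` is the inner parallel body `{z | z + r • B ⊆ K}`, the set of centres of balls of
radius `r` contained in `K`. It is an intersection of translates of `K`, hence compact and convex,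
and `C + r • B ⊆ K` by definition. Free rolling says exactly that `C + r • B` contains the frontier
of `K`, and in positive dimension every extreme point of `K` lies on the frontier. Since
`C + r • B` is closed and convex, the Krein–Milman theorem gives `K ⊆ C + r • B`.
In dimension zero the frontier is empty, but there all nonempty sets coincide.
-/

/-- If a Euclidean ball of radius `r > 0` rolls freely in a convex body `K`, then `K` is
the `r`-outer parallel body of a compact convex set `C`, i.e. `K = C + r·B₂ⁿ`. -/
theorem outer_parallel_body_of_ball_rolls_freely {n : ℕ}
    (K : Set (EuclideanSpace ℝ (Fin n))) (hKcomp : IsCompact K) (hKconv : Convex ℝ K)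
    (hKint : (interior K).Nonempty)
    (r : ℝ) (hr : 0 < r)
    (hroll : ∀ x ∈ frontier K, ∃ z : EuclideanSpace ℝ (Fin n),
      x ∈ Metric.closedBall z r ∧ Metric.closedBall z r ⊆ K) :
    ∃ C : Set (EuclideanSpace ℝ (Fin n)), IsCompact C ∧ Convex ℝ C ∧
      K = C + r • Metric.closedBall (0 : EuclideanSpace ℝ (Fin n)) 1 := by
  have hB : r • Metric.closedBall (0 : EuclideanSpace ℝ (Fin n)) 1 = Metric.closedBall 0 r := by
    rw [smul_unitClosedBall, Real.norm_of_nonneg hr.le]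
  rw [hB]
  rcases subsingleton_or_nontrivial (EuclideanSpace ℝ (Fin n)) with _ | _
  · refine ⟨K, hKcomp, hKconv, Set.Nonempty.eq_univ (hKint.mono interior_subset) |>.trans ?_⟩
    exact (Set.Nonempty.eq_univ ((hKint.mono interior_subset).add
      (Metric.nonempty_closedBall.2 hr.le))).symm
  have h0 : (0 : EuclideanSpace ℝ (Fin n)) ∈ Metric.closedBall 0 r :=
    Metric.mem_closedBall_self hr.le
  let C : Set (EuclideanSpace ℝ (Fin n)) :=
    ⋂ v ∈ Metric.closedBall (0 : EuclideanSpace ℝ (Fin n)) r, (fun z => z + v) ⁻¹' K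
  have memC : ∀ z, z ∈ C ↔ ∀ v ∈ Metric.closedBall (0 : EuclideanSpace ℝ (Fin n)) r, z + v ∈ K :=
    fun z => Set.mem_iInter₂
  have hCclosed : IsClosed C := isClosed_biInter fun v _ =>
    hKcomp.isClosed.preimage (by fun_prop)
  have hCcomp : IsCompact C := hKcomp.of_isClosed_subset hCclosed fun z hz => by
    simpa using (memC z).1 hz 0 h0
  have hCconv : Convex ℝ C := convex_iInter₂ fun v _ => hKconv.translate_preimage_left v
  refine ⟨C, hCcomp, hCconv, Set.Subset.antisymm ?_ ?_⟩
  · rw [← closure_convexHull_extremePoints hKcomp hKconv]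
    refine closure_minimal (convexHull_min ?_ (hCconv.add (convex_closedBall _ _)))
      (hCcomp.add (isCompact_closedBall _ _)).isClosed
    intro x hx
    have hxf : x ∈ frontier K :=
      ⟨subset_closure hx.1, fun hi =>
        Set.disjoint_left.1 (disjoint_interior_extremePoints K) hi hx⟩
    obtain ⟨z, hxz, hzK⟩ := hroll x hxf
    refine Set.mem_add.2 ⟨z, (memC z).2 fun v hv => hzK ?_, x - z, ?_, by abel⟩
    · simpa [dist_eq_norm] using hv
    · simpa [dist_eq_norm] using hxz
  · rintro _ ⟨z, hz, v, hv, rfl⟩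
    exact (memC z).1 hz v hv
end

section
/- Let n ≥ 2 and 1 < p < 2, and let B_p^n = {x ∈ ℝⁿ : Σ_{i=1}^n |x_i|^p ≤ 1}. Then no Euclidean ball rolls freely in B_p^n: for every r > 0 there exists x ∈ ∂B_p^n such that no closed Euclidean ball of radius r containing x is contained in B_p^n. -/
/-!
No ball of radius `r` inside `B` contains the boundary point `e₀`. Since every point of `B`
has `|x₀| ≤ 1`, a ball of radius `r` inside `B` that contains `e₀` has its center at
`(1 - r) e₀` (`center_eq`). Such a ball contains `(1 - t² / r) e₀ + t e₁` for all small `t > 0`,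
while Bernoulli's inequality gives `(1 - t² / r) ^ p + t ^ p ≥ 1 - p t² / r + t ^ p`. For `p < 2`
the term `t ^ p` dominates `p t² / r` as `t → 0`, so the sum exceeds `1`.
-/

/-- Some small `t > 0` for which the point `(1 - t² / r, t)` lies outside the planar
`ℓ_p` ball. -/
lemma exists_small_parameter {p r : ℝ} (hp1 : 1 < p) (hp2 : p < 2) (hr : 0 < r) :
    ∃ t : ℝ, 0 < t ∧ t ^ 2 / r ≤ r ∧ t ^ 2 / r ≤ 1 ∧
      1 < (1 - t ^ 2 / r) ^ p + t ^ p := by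
  have h1 : Filter.Tendsto (fun t : ℝ => t ^ (2 - p)) (nhdsWithin 0 (Set.Ioi 0)) (nhds 0) := by
    have := (Real.continuousAt_rpow_const (0 : ℝ) (2 - p) (Or.inr (by linarith))).tendsto
    rw [Real.zero_rpow (by linarith)] at this
    exact this.mono_left nhdsWithin_le_nhds
  have h2 : Filter.Tendsto (fun t : ℝ => t ^ 2 / r) (nhdsWithin 0 (Set.Ioi 0)) (nhds 0) := by
    have : Filter.Tendsto (fun t : ℝ => t ^ 2 / r) (nhds 0) (nhds ((0 : ℝ) ^ 2 / r)) :=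
      Continuous.tendsto (by fun_prop) 0
    simp only [ne_eq, OfNat.ofNat_ne_zero, not_false_eq_true, zero_pow, zero_div] at this
    exact this.mono_left nhdsWithin_le_nhds
  obtain ⟨t, ht1, ht2, ht3, ht0⟩ := ((h1.eventually_lt_const (show 0 < r / p by positivity)).and
    ((h2.eventually_lt_const hr).and ((h2.eventually_lt_const one_pos).and
      self_mem_nhdsWithin))).exists
  have ht0 : 0 < t := ht0
  refine ⟨t, ht0, ht2.le, ht3.le, ?_⟩
  have hb := one_add_mul_self_le_rpow_one_add (s := -(t ^ 2 / r)) (by linarith) hp1.le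
  have hpow : t ^ p * t ^ (2 - p) = t ^ 2 := by
    rw [← Real.rpow_add ht0, ← Real.rpow_natCast]
    norm_num
  have hlt : p * (t ^ 2 / r) < t ^ p := by
    have := mul_lt_mul_of_pos_left ht1 (Real.rpow_pos_of_pos ht0 p)
    rw [hpow] at this
    calc p * (t ^ 2 / r) < p * (t ^ p * (r / p) / r) := by gcongr
      _ = t ^ p := by field_simp
  rw [← sub_eq_add_neg] at hb
  linarith

lemma abs_coord_le_one {n : ℕ} {p : ℝ} (hp : 0 < p) {x : EuclideanSpace ℝ (Fin n)}
    (hx : ∑ i, |x i| ^ p ≤ 1) (i : Fin n) : |x i| ≤ 1 := by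
  have h : |x i| ^ p ≤ 1 := (Finset.single_le_sum (f := fun i => |x i| ^ p)
    (fun j _ => by positivity) (Finset.mem_univ i)).trans hx
  by_contra! hlt
  exact absurd h (not_le.mpr (Real.one_lt_rpow hlt hp))

/-- A center within distance `r` of `eᵢ` whose `i`-th coordinate is at most `1 - r` is
`(1 - r) eᵢ`: equality holds in the Cauchy–Schwarz inequality. -/
lemma center_eq {n : ℕ} {r : ℝ} (hr : 0 < r) (i : Fin n) (z : EuclideanSpace ℝ (Fin n))
    (hd : ‖z - EuclideanSpace.single i (1 : ℝ)‖ ≤ r) (hz : z i + r ≤ 1) :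
    z = (1 - r) • EuclideanSpace.single i (1 : ℝ) := by
  set e := EuclideanSpace.single i (1 : ℝ) with he
  have h := norm_add_sq_real (z - e) (r • e)
  have hin : inner ℝ (z - e) (r • e) = r * (z i - 1) := by
    rw [real_inner_smul_right, he, EuclideanSpace.inner_single_right]
    simp
  have hre : ‖r • e‖ = r := by
    rw [norm_smul, he]
    simp [abs_of_pos hr]
  rw [hin, hre] at h
  have hsq : ‖z - e‖ ^ 2 ≤ r ^ 2 := by gcongr
  have h0 : ‖z - e + r • e‖ ^ 2 = 0 := le_antisymm (by nlinarith) (by positivity)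
  have h1 : z - e + r • e = 0 := by simpa using h0
  rw [sub_smul, one_smul, ← sub_eq_zero, ← h1]
  abel

/-- For `n ≥ 2` and `1 < p < 2`, no Euclidean ball rolls freely in the unit ball
`B_p^n` of `ℓ_p^n`. -/
theorem no_ball_rolls_freely_in_lp_ball {n : ℕ} (hn : 2 ≤ n)
    (p : ℝ) (hp1 : 1 < p) (hp2 : p < 2)
    (B : Set (EuclideanSpace ℝ (Fin n)))
    (hB : B = {x : EuclideanSpace ℝ (Fin n) | ∑ i, |x i| ^ p ≤ 1}) :
    ∀ r : ℝ, 0 < r → ∃ x ∈ frontier B,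
      ∀ z : EuclideanSpace ℝ (Fin n),
        x ∈ Metric.closedBall z r → ¬ Metric.closedBall z r ⊆ B := by
  intro r hr
  have hp : 0 < p := by linarith
  obtain ⟨i, j, hij⟩ : ∃ i j : Fin n, i ≠ j :=
    ⟨⟨0, by omega⟩, ⟨1, by omega⟩, by simp⟩
  have hmem : ∀ x, x ∈ B ↔ ∑ i, |x i| ^ p ≤ 1 := by
    intro x
    rw [hB]
    rfl
  set e := EuclideanSpace.single i (1 : ℝ) with he
  have hei : e i = 1 := by simp [he]
  have hne : ‖e‖ = 1 := by simp [he]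
  refine ⟨e, ⟨subset_closure ?_, ?_⟩, ?_⟩
  · rw [hmem, Finset.sum_eq_single i]
    · simp [hei]
    · intro k _ hk
      simp [he, hk, Real.zero_rpow hp.ne']
    · simp
  · intro hint
    obtain ⟨ε, hε, hsub⟩ := Metric.nhds_basis_closedBall.mem_iff.mp (mem_interior_iff_mem_nhds.mp hint)
    have hq : e + ε • e ∈ B := hsub (by
      rw [Metric.mem_closedBall, dist_eq_norm, add_sub_cancel_left, norm_smul, hne]
      simp [abs_of_pos hε])
    have := (abs_le.mp (abs_coord_le_one hp ((hmem _).mp hq) i)).2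
    simp [hei] at this
    linarith
  · intro z hz hsub
    have hq : z + r • e ∈ B := hsub (by
      rw [Metric.mem_closedBall, dist_eq_norm, add_sub_cancel_left, norm_smul, hne]
      simp [abs_of_pos hr])
    have hzi : z i + r ≤ 1 := by
      have := (abs_le.mp (abs_coord_le_one hp ((hmem _).mp hq) i)).2
      simpa [hei] using this
    have hzeq : z = (1 - r) • e := by
      refine center_eq hr i z ?_ hzi
      rw [← dist_eq_norm, dist_comm]
      exact hz
    obtain ⟨t, ht0, ht1, ht2, ht3⟩ := exists_small_parameter hp1 hp2 hr
    set a := t ^ 2 / r with ha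
    have hta : t ^ 2 = a * r := by rw [ha]; field_simp
    have ha0 : 0 ≤ a := by positivity
    set f := EuclideanSpace.single j (1 : ℝ) with hf
    have hw : (1 - a) • e + t • f ∈ B := by
      apply hsub
      have hdiff : (1 - a) • e + t • f - z = (r - a) • e + t • f := by
        rw [hzeq]
        module
      have hnf : ‖f‖ = 1 := by simp [hf]
      have hin : inner ℝ e f = 0 := by
        rw [hf, EuclideanSpace.inner_single_right]
        simp [he, hij.symm]
      have hsq := norm_add_sq_real ((r - a) • e) (t • f)
      rw [real_inner_smul_left, real_inner_smul_right, hin, norm_smul, norm_smul, hne, hnf] at hsq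
      simp only [mul_one, mul_zero, add_zero, Real.norm_eq_abs, sq_abs] at hsq
      rw [Metric.mem_closedBall, dist_eq_norm, hdiff]
      refine le_of_sq_le_sq ?_ hr.le
      -- `(r - a)² + t² = r² - a (r - a)` because `t² = a r`
      nlinarith [mul_nonneg ha0 (sub_nonneg.mpr ht1)]
    have hle : |((1 - a) • e + t • f) i| ^ p + |((1 - a) • e + t • f) j| ^ p ≤ 1 := by
      refine le_trans ?_ ((hmem _).mp hw)
      rw [← Finset.sum_pair (f := fun k => |((1 - a) • e + t • f) k| ^ p) hij]
      exact Finset.sum_le_sum_of_subset_of_nonneg (Finset.subset_univ _)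
        (fun k _ _ => by positivity)
    have h1 : ((1 - a) • e + t • f) i = 1 - a := by simp [he, hf, hij]
    have h2 : ((1 - a) • e + t • f) j = t := by simp [he, hf, hij.symm]
    rw [h1, h2, abs_of_nonneg (sub_nonneg.mpr ht2), abs_of_pos ht0] at hle
    linarith
end
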